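/- arXiv:2304.02304 — 6 statements merged into one kernel-verified Lean document; each statement's English description precedes it below -/
import Mathlib

section
/- The matrices M₁ and M₂ are invertible and satisfy the braid relation M₁·M₂·M₁ = M₂·M₁·M₂; consequently the assignment σ₁ ↦ M₁, σ₂ ↦ M₂ defines a 6-dimensional complex representation ρ of the braid group B₃ = ⟨σ₁, σ₂ | σ₁σ₂σ₁ = σ₂σ₁σ₂⟩. -/
open Matrix Polynomial

noncomputable def M1 (q l : ℂ) : Matrix (Fin 6) (Fin 6) ℂ :=
  !![q, -q^2*l, q^2, q^2, -q^2/l, 1;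
     0, l,      q^2, 0,   1/l,    1;
     0, 0,      q^2, 0,   0,      1;
     0, 0,      0,   q^2, -q^2/l, 1;
     0, 0,      0,   0,   1/l,    1;
     0, 0,      0,   0,   0,      1]

noncomputable def M2 (q l : ℂ) : Matrix (Fin 6) (Fin 6) ℂ :=
  !![1,    0,    0,   0,   0,   0;
     -1/l, 1/l,  0,   0,   0,   0;
     q,    1,    q^2, 0,   0,   0;
     -q^2, 0,    0,   q^2, 0,   0;
     l,    -l,   0,   -l,  l,   0;
     -1,   -q^2, -q,  1,   q^2, q]

/-- The braid relation set: `B₃ = ⟨σ₁, σ₂ | σ₁σ₂σ₁ = σ₂σ₁σ₂⟩` as a presented group. -/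
def braidRels : Set (FreeGroup (Fin 2)) :=
  {FreeGroup.of 0 * FreeGroup.of 1 * FreeGroup.of 0 *
    (FreeGroup.of 1 * FreeGroup.of 0 * FreeGroup.of 1)⁻¹}

theorem unit_M1 (q l : ℂ) (hq3 : q^3 = 1) (hl0 : l ≠ 0) : IsUnit (M1 q l) := by
  have hq0 : q ≠ 0 := by rintro rfl; norm_num at hq3
  rw [Matrix.isUnit_iff_isUnit_det, Matrix.det_of_upperTriangular]
  · simp [Fin.prod_univ_succ, M1, hq0, hl0]
  · intro i j h
    fin_cases i <;> fin_cases j <;> first | rfl | (exfalso; revert h; decide)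

theorem unit_M2 (q l : ℂ) (hq3 : q^3 = 1) (hl0 : l ≠ 0) : IsUnit (M2 q l) := by
  have hq0 : q ≠ 0 := by rintro rfl; norm_num at hq3
  rw [Matrix.isUnit_iff_isUnit_det, Matrix.det_of_lowerTriangular]
  · simp [Fin.prod_univ_succ, M2, hq0, hl0]
  · intro i j h
    fin_cases i <;> fin_cases j <;> first | rfl | (exfalso; revert h; decide)

set_option maxHeartbeats 4000000 in
theorem braid_M (q l : ℂ) (hq3 : q^3 = 1) (hq1 : q ≠ 1) (hl0 : l ≠ 0) :
    M1 q l * M2 q l * M1 q l = M2 q l * M1 q l * M2 q l := by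
  have hq : q^2 = -1 - q := by
    have h : (q - 1) * (q^2 + q + 1) = 0 := by linear_combination hq3
    rcases mul_eq_zero.mp h with h | h
    · exact absurd (sub_eq_zero.mp h) hq1
    · linear_combination h
  obtain ⟨m, hm⟩ : ∃ m, m = l⁻¹ := ⟨_, rfl⟩
  have hlm : l * m = 1 := by rw [hm]; exact mul_inv_cancel₀ hl0
  ext i j
  fin_cases i <;> fin_cases j <;>
    simp [M1, M2, Matrix.mul_apply, Fin.sum_univ_succ, div_eq_mul_inv, ← hm] <;>
    grind

theorem stmt0 (q l : ℂ) (hq3 : q^3 = 1) (hq1 : q ≠ 1) (hl0 : l ≠ 0) :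
    IsUnit (M1 q l) ∧ IsUnit (M2 q l) ∧
    M1 q l * M2 q l * M1 q l = M2 q l * M1 q l * M2 q l ∧
    ∃ ρ : PresentedGroup braidRels →* GL (Fin 6) ℂ,
      (↑(ρ (PresentedGroup.of 0)) : Matrix (Fin 6) (Fin 6) ℂ) = M1 q l ∧
      (↑(ρ (PresentedGroup.of 1)) : Matrix (Fin 6) (Fin 6) ℂ) = M2 q l := by
  have h1 := unit_M1 q l hq3 hl0
  have h2 := unit_M2 q l hq3 hl0
  have hb := braid_M q l hq3 hq1 hl0
  refine ⟨h1, h2, hb, ?_⟩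
  let f : Fin 2 → GL (Fin 6) ℂ := ![h1.unit, h2.unit]
  have hf : ∀ r ∈ braidRels, FreeGroup.lift f r = 1 := by
    intro r hr
    rw [braidRels, Set.mem_singleton_iff] at hr
    subst hr
    rw [map_mul, map_inv, mul_inv_eq_one]
    simp only [map_mul, FreeGroup.lift_apply_of]
    apply Units.ext
    exact hb
  refine ⟨PresentedGroup.toGroup hf, ?_, ?_⟩
  · rw [PresentedGroup.toGroup.of]; rfl
  · rw [PresentedGroup.toGroup.of]; rfl
end

section
/- (Proposition 3.2) There is no ρ-invariant subspace of ℂ⁶ of dimension 2 if and only if λ₁³ ≠ q. -/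
open Matrix Polynomial

/-- A subspace `W ⊆ ℂ⁶` is ρ-invariant if it is mapped into itself by both `M1` and `M2`
(acting on column vectors). -/
def RhoInvariant (q l : ℂ) (W : Submodule ℂ (Fin 6 → ℂ)) : Prop :=
  (∀ x ∈ W, (M1 q l).mulVec x ∈ W) ∧ (∀ x ∈ W, (M2 q l).mulVec x ∈ W)

lemma minor_zero (W : Submodule ℂ (Fin 6 → ℂ)) (hW : Module.finrank ℂ W = 2)
    {x y z : Fin 6 → ℂ} (hx : x ∈ W) (hy : y ∈ W) (hz : z ∈ W) (i j k : Fin 6) :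
    x i * (y j * z k - y k * z j) - x j * (y i * z k - y k * z i)
      + x k * (y i * z j - y j * z i) = 0 := by
  have hdep : ¬ LinearIndependent ℂ (![⟨x, hx⟩, ⟨y, hy⟩, ⟨z, hz⟩] : Fin 3 → W) := by
    intro h
    have := h.fintype_card_le_finrank
    simp [hW] at this
  rw [Fintype.not_linearIndependent_iff] at hdep
  obtain ⟨g, hg, i0, hi0⟩ := hdep
  have hg' : ∀ n, g 0 * x n + g 1 * y n + g 2 * z n = 0 := by
    intro n
    have := congrArg (fun w : W => (w : Fin 6 → ℂ) n) hg
    simpa [Fin.sum_univ_succ, add_assoc] using this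
  have hi := hg' i
  have hj := hg' j
  have hk := hg' k
  apply (mul_eq_zero.mp (?_ : g i0 * _ = 0)).resolve_left hi0
  fin_cases i0
  · change g 0 * _ = 0
    linear_combination hi * (y j * z k - y k * z j) - hj * (y i * z k - y k * z i)
      + hk * (y i * z j - y j * z i)
  · change g 1 * _ = 0
    linear_combination -hi * (x j * z k - x k * z j) + hj * (x i * z k - x k * z i)
      - hk * (x i * z j - x j * z i)
  · change g 2 * _ = 0
    linear_combination hi * (x j * y k - x k * y j) - hj * (x i * y k - x k * y i)
      + hk * (x i * y j - x j * y i)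

lemma M1_mulVec (q l a b c d e f : ℂ) (hl0 : l ≠ 0) :
    l • (M1 q l).mulVec ![a, b, c, d, e, f] =
      ![q*l*a - q^2*l^2*b + q^2*l*c + q^2*l*d - q^2*e + l*f,
        l^2*b + q^2*l*c + e + l*f, q^2*l*c + l*f, q^2*l*d - q^2*e + l*f, e + l*f, l*f] := by
  ext i
  fin_cases i <;> simp [M1] <;> field_simp <;> ring

lemma M2_mulVec (q l a b c d e f : ℂ) (hl0 : l ≠ 0) :
    l • (M2 q l).mulVec ![a, b, c, d, e, f] =
      ![l*a, -a + b, q*l*a + l*b + q^2*l*c, -q^2*l*a + q^2*l*d,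
        l^2*a - l^2*b - l^2*d + l^2*e, -l*a - q^2*l*b - q*l*c + l*d + q^2*l*e + q*l*f] := by
  ext i
  fin_cases i <;> simp [M2] <;> field_simp <;> ring

lemma inv1 {q l : ℂ} (hl0 : l ≠ 0) {W : Submodule ℂ (Fin 6 → ℂ)} (hW : RhoInvariant q l W)
    {a b c d e f : ℂ} (h : ![a, b, c, d, e, f] ∈ W) :
    ![q*l*a - q^2*l^2*b + q^2*l*c + q^2*l*d - q^2*e + l*f,
        l^2*b + q^2*l*c + e + l*f, q^2*l*c + l*f, q^2*l*d - q^2*e + l*f, e + l*f, l*f] ∈ W := by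
  rw [← M1_mulVec q l a b c d e f hl0]
  exact W.smul_mem _ (hW.1 _ h)

lemma inv2 {q l : ℂ} (hl0 : l ≠ 0) {W : Submodule ℂ (Fin 6 → ℂ)} (hW : RhoInvariant q l W)
    {a b c d e f : ℂ} (h : ![a, b, c, d, e, f] ∈ W) :
    ![l*a, -a + b, q*l*a + l*b + q^2*l*c, -q^2*l*a + q^2*l*d,
        l^2*a - l^2*b - l^2*d + l^2*e, -l*a - q^2*l*b - q*l*c + l*d + q^2*l*e + q*l*f] ∈ W := by
  rw [← M2_mulVec q l a b c d e f hl0]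
  exact W.smul_mem _ (hW.2 _ h)

lemma exists_eig {q l : ℂ} {W : Submodule ℂ (Fin 6 → ℂ)} (hW : RhoInvariant q l W)
    (h2 : Module.finrank ℂ W = 2) :
    ∃ μ : ℂ, ∃ v : Fin 6 → ℂ, v ∈ W ∧ v ≠ 0 ∧ (M1 q l).mulVec v = μ • v := by
  let T : W →ₗ[ℂ] W := ((M1 q l).mulVecLin).restrict (fun x hx => hW.1 x hx)
  have : Nontrivial W := Module.nontrivial_of_finrank_pos (R := ℂ) (by omega)
  obtain ⟨μ, hμ⟩ := Module.End.exists_eigenvalue (K := ℂ) (V := W) T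
  obtain ⟨v, hv⟩ := hμ.exists_hasEigenvector
  refine ⟨μ, v, v.2, fun h => hv.2 (Subtype.ext h), ?_⟩
  have := congrArg (fun w : W => (w : Fin 6 → ℂ)) hv.apply_eq_smul
  exact this

lemma eig_q {q l : ℂ} (hl0 : l ≠ 0) (hq : q^2 + q + 1 = 0) {W : Submodule ℂ (Fin 6 → ℂ)} (hW : RhoInvariant q l W)
    (h2 : Module.finrank ℂ W = 2) (h : ![1, 0, 0, 0, 0, 0] ∈ W) : False := by
  have hB := inv2 hl0 hW h
  have hAB := inv1 hl0 hW hB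
  have := minor_zero W h2 h hB hAB 0 1 5
  simp at this
  grind

lemma eig_l {q l : ℂ} (hl0 : l ≠ 0) (hq : q^2 + q + 1 = 0) {W : Submodule ℂ (Fin 6 → ℂ)} (hW : RhoInvariant q l W)
    (h2 : Module.finrank ℂ W = 2) (h : ![q^2*l, q-l, 0, 0, 0, 0] ∈ W) : False := by
  have hB := inv2 hl0 hW h
  have hAB := inv1 hl0 hW hB
  have := minor_zero W h2 h hB hAB 0 3 5
  simp at this
  have : l^5 = 0 := by grind
  exact hl0 (pow_eq_zero_iff (by norm_num) |>.mp this)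

lemma hp_aux {q l : ℂ} (hqq : q^2+q+1=0) : (1-q)*q*(l^2-l+1) = q^2*l*(q^2-l) - q^2*(l-1)^2 - q^2*(l-1)*(l+q)
        + q^2*(1-q^2)*(l-1) - (1-q^2)*(l-1)^2 := by
  grind
lemma aux_b {l b : ℂ} (h : l^6+l^3+1=0) (hb : (1 - l^2) * b = 1) : b = (1+l^2+l^4)*(2+l^6)/3 := by
  grind
lemma aux_a {l a : ℂ} (h : l^6+l^3+1=0) (ha : (l - (l^3)^2) * a = -(l^3)^2) : a = -l^5*(1+l^5+l^10)*(2+l^15)/3 := by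
  grind
lemma aux_d {l d : ℂ} (h : l^6+l^3+1=0) (hd : (1 - (l^3)^2*l) * d = -(l^3)^2) : d = -l^6*(1+l^7+l^14)*(2+l^21)/3 := by
  grind
lemma aux_c {l a c : ℂ} (h : l^6+l^3+1=0) (ha : (l - (l^3)^2) * a = -(l^3)^2)  (hd : (l - (l^3)^2) * c = l^3*l+(l^3)^2) : c = l*a-1 := by
  grind
lemma aux_PRS {q l a b c d : ℂ} (hqq : q^2+q+1=0) (hc : l^3 = q) (ha : (l - q^2) * a = -q^2)
  (hcc : (l - q^2) * c = q*l + q^2)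
  (hb : (1 - l^2) * b = 1)
  (hd : (1 - q^2*l) * d = -q^2) : b = l*d ∧ c = q^2*a + q ∧ d = q^2*b - q^2 ∧
   a = l*a*a + q^2*l*a - b*l^2*(a+c) ∧ b = l*a*b - b*l^2*(b+d-1) ∧ q^2*l*c = c*(l*a+q^2*l) - d*l^2*(a+c) ∧
   q^2*l*d = c*l*b - d*l^2*(b+d-1) := by
  subst hc
  have h : l^6+l^3+1=0 := by linear_combination hqq
  have e4 := aux_c h ha hcc
  have e1 := aux_a h ha
  have e2 := aux_b h hb
  have e3 := aux_d h hd
  clear ha hb hcc hd hqq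
  subst e4 e1 e2 e3
  refine ⟨?_,?_,?_,?_,?_,?_,?_⟩ <;> grind


lemma eig_linv {q l : ℂ} (hl0 : l ≠ 0) (hq : q^2 + q + 1 = 0) (hm1 : l ≠ -1) (h1 : l ≠ 1)
    (hlq2 : l ≠ q^2) (hc : l^3 ≠ q)
    {W : Submodule ℂ (Fin 6 → ℂ)} (hW : RhoInvariant q l W)
    (h2 : Module.finrank ℂ W = 2)
    (h : ![-q*(q-l^3), (1-q^2*l)*(1-q*l), 0, -q^2*(1-l^2)*(1-q*l),
      (1-l^2)*(1-q^2*l)*(1-q*l), 0] ∈ W) :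
    False := by
  have hB := inv2 hl0 hW h
  have hAB := inv1 hl0 hW hB
  have e1 := minor_zero W h2 h hB hAB 1 2 3
  have e2 := minor_zero W h2 h hB hAB 0 2 5
  simp at e1 e2
  have f1 : l^3 * ((l+1)*(l-1)*(l-q^2)^2*(l^3-q)*(l^3-q^2)) = 0 := by
    clear e2 h hB hAB hm1 h1 hlq2 hc hl0
    grind
  have f2 : l^5 * ((l^3-q)^2 * (q^2 - (2+q)*l + (1+2*q)*l^2 - q^2*l^3)) = 0 := by
    clear e1 h hB hAB hm1 h1 hlq2 hc hl0 f1
    grind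
  have g1 : l^3 - q^2 = 0 := by
    simpa [hl0, sub_eq_zero, hm1, h1, hlq2, hc, add_eq_zero_iff_eq_neg] using f1
  have g2 : q^2 - (2+q)*l + (1+2*q)*l^2 - q^2*l^3 = 0 := by
    have : l^3 - q ≠ 0 := sub_ne_zero.mpr hc
    simpa [hl0, this] using f2
  clear e1 e2 f1 f2 h hB hAB
  grind

lemma eig_one {q l : ℂ} (hl0 : l ≠ 0) (hq : q^2 + q + 1 = 0) (h1 : l ≠ 1)
    {W : Submodule ℂ (Fin 6 → ℂ)} (hW : RhoInvariant q l W)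
    (h2 : Module.finrank ℂ W = 2)
    (h : ![-q*(l^2-l+1), q^2-l, (l-1)^2, (l-1)*(l+q), (1-q^2)*l*(l-1), (1-q^2)*(l-1)^2] ∈ W) :
    False := by
  have hB := inv2 hl0 hW h
  have hAB := inv1 hl0 hW hB
  have e1 := minor_zero W h2 h hB hAB 1 2 3
  have e2 := minor_zero W h2 h hB hAB 1 3 4
  have e3 := minor_zero W h2 h hB hAB 0 2 3
  simp at e1 e2 e3
  have f1 : l^2 * ((l-1)*((l^3-q^2)*(l^2+q))) = 0 := by
    clear e2 e3 h hB hAB h1 hl0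
    grind
  have f2 : l^3 * ((l^3-q^2)*(-2+(1-2*q)*l+4*q*l^2-q*l^3)) = 0 := by
    clear e1 e3 h hB hAB h1 hl0 f1
    grind
  have f3 : l^3 * ((l-1)*(q^2+2*q*l-q^2*l^2+2*l^3+q^2*l^4)) = 0 := by
    clear e1 e2 h hB hAB h1 hl0 f1 f2
    grind
  clear e1 e2 e3 h hB hAB
  have h1' : l - 1 ≠ 0 := sub_ne_zero.mpr h1
  replace f1 := (mul_eq_zero.mp f1).resolve_left (pow_ne_zero _ hl0)
  replace f1 := (mul_eq_zero.mp f1).resolve_left h1'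
  replace f2 := (mul_eq_zero.mp f2).resolve_left (pow_ne_zero _ hl0)
  replace f3 := (mul_eq_zero.mp f3).resolve_left (pow_ne_zero _ hl0)
  replace f3 := (mul_eq_zero.mp f3).resolve_left h1'
  rcases mul_eq_zero.mp f1 with g | g
  · clear f1 f2
    grind
  · rcases mul_eq_zero.mp f2 with g' | g'
    · clear f1 f2 f3
      grind
    · clear f1 f2 f3
      grind

lemma eig_q2a {q l : ℂ} (hl0 : l ≠ 0) (hq : q^2 + q + 1 = 0)
    {W : Submodule ℂ (Fin 6 → ℂ)} (hW : RhoInvariant q l W)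
    (h2 : Module.finrank ℂ W = 2)
    (h : ![-q^2, 0, 0, q-q^2, 0, 0] ∈ W) :
    False := by
  have hB := inv2 hl0 hW h
  have hAB := inv1 hl0 hW hB
  have e1 := minor_zero W h2 h hB hAB 0 1 2
  simp at e1
  clear h hB hAB
  have : l^2 = 0 := by clear hl0; grind
  exact hl0 (pow_eq_zero_iff (by norm_num) |>.mp this)

lemma eig_q2b {q l t : ℂ} (hl0 : l ≠ 0) (hq : q^2 + q + 1 = 0) (hc : l^3 ≠ q)
    {W : Submodule ℂ (Fin 6 → ℂ)} (hW : RhoInvariant q l W)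
    (h2 : Module.finrank ℂ W = 2)
    (h : ![-q*l -q^2*(l-q^2) - q^2*t, -q^2*(q-q^2), (l-q^2)*(q-q^2), t*(q-q^2), 0, 0] ∈ W) :
    False := by
  have hB := inv2 hl0 hW h
  have hAB := inv1 hl0 hW hB
  have e1 := minor_zero W h2 h hB hAB 0 1 4
  have e2 := minor_zero W h2 h hB hAB 1 3 4
  simp at e1 e2
  clear h hB hAB
  have f1 : l^3 * ((t-q*l-q^2)*(t-q^2*l-q)) = 0 := by
    clear e2 hc hl0
    grind
  have : t = q*l+q^2 ∨ t = q^2*l+q := by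
    rcases mul_eq_zero.mp f1 with h | h
    · simp [hl0] at h
    · rcases mul_eq_zero.mp h with h | h
      · left; linear_combination h
      · right; linear_combination h
  clear e1 f1
  rcases this with rfl | rfl
  · have : l^3 * (l^3 - q) = 0 := by
      clear hc hl0
      grind
    simp [hl0, sub_eq_zero, hc] at this
  · have : l^5 = 0 := by
      clear hc hl0
      grind
    exact hl0 (pow_eq_zero_iff (by norm_num) |>.mp this)

lemma explicit_mem {W : Submodule ℂ (Fin 6 → ℂ)} {v u : Fin 6 → ℂ} {r c : ℂ} (hv : v ∈ W)
    (hr : r ≠ 0) (h : ∀ i, r * u i = c * v i) : u ∈ W := by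
  have h' : r • u = c • v := by
    ext i
    simpa using h i
  rw [← W.smul_mem_iff hr, h']
  exact W.smul_mem _ hv

lemma no_inv {q l : ℂ} (hl0 : l ≠ 0) (hqq : q^2 + q + 1 = 0) (hm1 : l ≠ -1) (h1 : l ≠ 1)
    (hlq : l ≠ q) (hlq2 : l ≠ q^2) (hc : l^3 ≠ q)
    {W : Submodule ℂ (Fin 6 → ℂ)} (hW : RhoInvariant q l W)
    (h2 : Module.finrank ℂ W = 2) : False := by
  obtain ⟨μ, v, hv, hv0, hμ⟩ := exists_eig hW h2
  obtain ⟨a, b, c, d, e, f, rfl⟩ : ∃ a b c d e f : ℂ, v = ![a, b, c, d, e, f] :=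
    ⟨v 0, v 1, v 2, v 3, v 4, v 5, by ext i; fin_cases i <;> rfl⟩
  have hM := M1_mulVec q l a b c d e f hl0
  rw [hμ] at hM
  have E0 := congrFun hM 0
  have E1 := congrFun hM 1
  have E2 := congrFun hM 2
  have E3 := congrFun hM 3
  have E4 := congrFun hM 4
  have E5 := congrFun hM 5
  simp at E0 E1 E2 E3 E4 E5
  clear hM hμ
  have hq1 : 1 - q ≠ 0 := by grind
  have hq2 : 1 - q^2 ≠ 0 := by grind
  have hqd : q - q^2 ≠ 0 := by grind
  have hl1 : l - 1 ≠ 0 := sub_ne_zero.mpr h1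
  have hlq' : q - l ≠ 0 := sub_ne_zero.mpr hlq.symm
  have hlq2' : l - q^2 ≠ 0 := sub_ne_zero.mpr hlq2
  have hn1 : 1 - q * l ≠ 0 := by grind
  have hn2 : 1 - q^2 * l ≠ 0 := by grind
  have hn3 : 1 - l^2 ≠ 0 := by grind
  by_cases hf : f = 0
  · subst hf
    by_cases he : e = 0
    · subst he
      by_cases hcc : c = 0
      · subst hcc
        by_cases hd : d = 0
        · subst hd
          by_cases hb : b = 0
          · subst hb
            have ha : a ≠ 0 := by
              rintro rfl
              exact hv0 (by ext i; fin_cases i <;> rfl)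
            refine eig_q hl0 hqq hW h2 (explicit_mem (r := a) (c := 1) hv ha ?_)
            intro i
            fin_cases i <;> simp
          · have : μ = l := by grind
            subst this
            refine eig_l hl0 hqq hW h2 (explicit_mem (r := b) (c := q - μ) hv hb ?_)
            intro i
            fin_cases i <;> simp
            · apply mul_left_cancel₀ hl0
              linear_combination E0
            · ring
        · have : μ = q^2 := by grind
          subst this
          have hb : b = 0 := by grind
          subst hb
          refine eig_q2a hl0 hqq hW h2 (explicit_mem (r := d) (c := q - q^2) hv hd ?_)
          intro i
          fin_cases i <;> simp <;> grind
      · have : μ = q^2 := by grind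
        subst this
        have k1 : (l - q^2) * b = - q^2 * c := by grind
        have k0 : (q - q^2) * a = q^2*l*b - q^2*c - q^2*d := by
          apply mul_left_cancel₀ hl0
          linear_combination -E0
        refine eig_q2b (t := d * (l - q^2) / c) hl0 hqq hc hW h2
          (explicit_mem (r := c) (c := (q - q^2) * (l - q^2)) hv hcc ?_)
        intro i
        fin_cases i <;> simp <;> field_simp
        · linear_combination -(l - q^2)*k0 - q^2*l*k1 + l*q*c*(q-1)*hqq
        · linear_combination -q*k1
    · have hm : μ * l = 1 := by grind
      have k2 : c = 0 := by grind
      subst k2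
      have k3 : (1 - q^2 * l) * d = -q^2 * e := by linear_combination E3 - d*hm
      have k1 : (1 - l^2) * b = e := by linear_combination E1 - b*hm
      have k0 : (1 - q*l) * a = - q^2*l^2*b + q^2*l*d - q^2*e := by
        linear_combination E0 - a*hm
      refine eig_linv hl0 hqq hm1 h1 hlq2 hc hW h2
          (explicit_mem (r := e) (c := (1-l^2)*(1-q^2*l)*(1-q*l)) hv he ?_)
      clear E0 E1 E2 E3 E4 E5 hv
      intro i
      fin_cases i <;> simp
      · linear_combination -(1-l^2)*(1-q^2*l)*k0 + q^2*l^2*(1-q^2*l)*k1 - q^2*l*(1-l^2)*k3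
          + e*l^3*q*(1-q)*hqq
      · linear_combination -(1-q^2*l)*(1-q*l)*k1
      · linear_combination -(1-l^2)*(1-q*l)*k3
      · ring
  · have : μ = 1 := by grind
    subst this
    have k4 : (l - 1) * e = l * f := by grind
    have k3 : (1 - q^2) * (l-1) * d = (l+q) * f := by
      apply mul_left_cancel₀ hl0
      linear_combination (l-1)*E3 - q^2*k4 - f*l*hqq
    have k2 : (1 - q^2) * c = f := by
      apply mul_left_cancel₀ hl0
      linear_combination E2
    have k1 : (1 - q^2) * (l-1)^2 * b = (q^2 - l) * f := by
      apply mul_left_cancel₀ hl0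
      linear_combination -(1-q^2)*(l-1)*E1 - q^2*l*(l-1)*k2 - (1-q^2)*k4
    have hp : (1-q)*q*(l^2-l+1) = q^2*l*(q^2-l) - q^2*(l-1)^2 - q^2*(l-1)*(l+q)
        + q^2*(1-q^2)*(l-1) - (1-q^2)*(l-1)^2 := hp_aux hqq
    have k0 : (1 - q^2) * (l-1)^2 * a = -q*(l^2-l+1) * f := by
      apply mul_left_cancel₀ (mul_ne_zero hl0 hq1)
      linear_combination (1-q^2)*(l-1)^2*E0 - q^2*l^2*k1 + q^2*l*(l-1)^2*k2 + q^2*l*(l-1)*k3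
        - q^2*(1-q^2)*(l-1)*k4 + f*l*hp
    refine eig_one hl0 hqq h1 hW h2
        (explicit_mem (r := f) (c := (1-q^2)*(l-1)^2) hv hf ?_)
    clear E0 E1 E2 E3 E4 E5 hv
    intro i
    fin_cases i <;> simp
    · linear_combination -k0
    · linear_combination -k1
    · linear_combination -(l-1)^2*k2
    · linear_combination -(l-1)*k3
    · linear_combination -(1-q^2)*(l-1)*k4
    · ring

lemma exists_inv {q l : ℂ} (hl0 : l ≠ 0) (hqq : q^2 + q + 1 = 0) (hm1 : l ≠ -1) (h1 : l ≠ 1)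
    (hlq : l ≠ q) (hlq2 : l ≠ q^2) (hc : l^3 = q) :
    ∃ W : Submodule ℂ (Fin 6 → ℂ), RhoInvariant q l W ∧ Module.finrank ℂ W = 2 := by
  have hlq2' : l - q^2 ≠ 0 := sub_ne_zero.mpr hlq2
  have hn2 : 1 - q^2 * l ≠ 0 := by grind
  have hn3 : 1 - l^2 ≠ 0 := by grind
  obtain ⟨a, ha⟩ : ∃ a, (l - q^2) * a = -q^2 := ⟨-q^2 / (l - q^2), by field_simp⟩
  obtain ⟨c, hcc⟩ : ∃ c, (l - q^2) * c = q*l + q^2 := ⟨(q*l+q^2) / (l - q^2), by field_simp⟩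
  obtain ⟨b, hb⟩ : ∃ b, (1 - l^2) * b = 1 := ⟨1 / (1 - l^2), by field_simp⟩
  obtain ⟨d, hd⟩ : ∃ d, (1 - q^2*l) * d = -q^2 := ⟨-q^2 / (1 - q^2*l), by field_simp⟩
  have key : ∀ v : Fin 6 → ℂ, v ∈ Submodule.span ℂ {![0, a, 1, c, 0, 0], ![0, b, 0, d, 1, 0]} ↔
      v 0 = 0 ∧ v 5 = 0 ∧ v 1 = a * v 2 + b * v 4 ∧ v 3 = c * v 2 + d * v 4 := by
    intro v
    rw [Submodule.mem_span_pair]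
    constructor
    · rintro ⟨x, y, rfl⟩
      simp
      constructor <;> ring
    · rintro ⟨h0, h5, h1, h3⟩
      refine ⟨v 2, v 4, ?_⟩
      ext i
      fin_cases i <;> simp [h0, h5, h1, h3] <;> ring
  have vec : ∀ x y : ℂ, x • ![0, a, 1, c, 0, 0] + y • ![0, b, 0, d, 1, 0]
      = ![0, a*x+b*y, x, c*x+d*y, y, 0] := by
    intro x y
    ext i
    fin_cases i <;> simp <;> ring
  have P1 : c = l*a - 1 := by grind
  obtain ⟨P2, R1, R2, S1, S2, S3, S4⟩ := aux_PRS hqq hc ha hcc hb hd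
  refine ⟨Submodule.span ℂ {![0, a, 1, c, 0, 0], ![0, b, 0, d, 1, 0]}, ⟨?_, ?_⟩, ?_⟩
  · intro x hx
    obtain ⟨x, y, rfl⟩ := Submodule.mem_span_pair.mp hx
    rw [← Submodule.smul_mem_iff _ hl0, vec, M1_mulVec _ _ _ _ _ _ _ _ hl0, key]
    simp
    refine ⟨?_, ?_, ?_⟩
    · linear_combination q^2*l*x*P1 + y*q^2*hb - q^2*y*P2
    · linear_combination l*x*ha - y*hb
    · linear_combination -y*hd
  · intro x hx
    obtain ⟨x, y, rfl⟩ := Submodule.mem_span_pair.mp hx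
    rw [← Submodule.smul_mem_iff _ hl0, vec, M2_mulVec _ _ _ _ _ _ _ _ hl0, key]
    simp
    refine ⟨?_, ?_, ?_⟩
    · linear_combination l*x*R1 + l*y*R2
    · linear_combination x*S1 + y*S2
    · linear_combination x*S3 + y*S4
  · have hli : LinearIndependent ℂ
        (![![0, a, 1, c, 0, 0], ![0, b, 0, d, 1, 0]] : Fin 2 → Fin 6 → ℂ) := by
      rw [LinearIndependent.pair_iff]
      intro s t h
      have e2 := congrFun h 2
      have e4 := congrFun h 4
      simp at e2 e4
      exact ⟨e2, e4⟩
    have := finrank_span_eq_card hli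
    rw [Matrix.range_cons_cons_empty] at this
    simpa using this

theorem stmt5 (q l : ℂ) (hq3 : q^3 = 1) (hq1 : q ≠ 1) (hl0 : l ≠ 0)
    (hm1 : l ≠ -1) (h1 : l ≠ 1) (hq : l ≠ q) (hq2 : l ≠ q^2) :
    (¬ ∃ W : Submodule ℂ (Fin 6 → ℂ), RhoInvariant q l W ∧ Module.finrank ℂ W = 2) ↔
      l^3 ≠ q := by
  have hqq : q^2 + q + 1 = 0 := by
    have : (q - 1) * (q^2 + q + 1) = 0 := by linear_combination hq3
    exact (mul_eq_zero.mp this).resolve_left (sub_ne_zero.mpr hq1)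
  constructor
  · intro h hc
    exact h (exists_inv hl0 hqq hm1 h1 hq hq2 hc)
  · rintro hc ⟨W, hW, h2⟩
    exact no_inv hl0 hqq hm1 h1 hq hq2 hc hW h2
end

section
/- (Proposition 3.3) There is no ρ-invariant subspace of ℂ⁶ of dimension 3 if and only if λ₁² ≠ −q and λ₁² ≠ −q². -/
open Matrix Polynomial

/-- One step: applying `M1 - a` inside an invariant subspace. -/
lemma step1 {q l : ℂ} {W : Submodule ℂ (Fin 6 → ℂ)} (hW : RhoInvariant q l W) (a : ℂ)
    {x0 x1 x2 x3 x4 x5 : ℂ} (hx : ![x0, x1, x2, x3, x4, x5] ∈ W) :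
    ![(q - a) * x0 - q^2 * l * x1 + q^2 * x2 + q^2 * x3 - q^2 * l⁻¹ * x4 + x5,
      (l - a) * x1 + q^2 * x2 + l⁻¹ * x4 + x5,
      (q^2 - a) * x2 + x5,
      (q^2 - a) * x3 - q^2 * l⁻¹ * x4 + x5,
      (l⁻¹ - a) * x4 + x5,
      (1 - a) * x5] ∈ W := by
  have h := W.sub_mem (hW.1 _ hx) (W.smul_mem a hx)
  convert h using 1
  ext i
  fin_cases i <;> simp [M1] <;> ring

lemma step2 {q l : ℂ} {W : Submodule ℂ (Fin 6 → ℂ)} (hW : RhoInvariant q l W)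
    {x0 x1 x2 x3 x4 x5 : ℂ} (hx : ![x0, x1, x2, x3, x4, x5] ∈ W) :
    ![x0, -l⁻¹ * x0 + l⁻¹ * x1, q * x0 + x1 + q^2 * x2, -q^2 * x0 + q^2 * x3,
      l * x0 - l * x1 - l * x3 + l * x4,
      -x0 - q^2 * x1 - q * x2 + x3 + q^2 * x4 + q * x5] ∈ W := by
  have h := hW.2 _ hx
  convert h using 1
  ext i
  fin_cases i <;> simp [M2, Matrix.mulVec, dotProduct, Fin.sum_univ_six] <;> ring

lemma proj_q {q l : ℂ} {W : Submodule ℂ (Fin 6 → ℂ)} (hW : RhoInvariant q l W)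
    (hq : q^2 + q + 1 = 0) (hl : l ≠ 0)
    {x0 x1 x2 x3 x4 x5 : ℂ} (hx : ![x0, x1, x2, x3, x4, x5] ∈ W) :
    (-3 * (l - q) * (l - q^2) * l⁻¹ * x0 - 3 * q^2 * (l - q^2) * x1
      - (1 + 2 * q) * (l + 1) * (l - q^2) * l⁻¹ * x2 + (1 - q) * (l - q) * (l - q^2) * l⁻¹ * x3
      - (1 + 2 * q) * (l - 1) * l⁻¹ * x4 + (1 + 2 * q) * x5) • ![1, 0, 0, 0, 0, 0] ∈ W := by
  have h := step1 hW l (step1 hW (q^2) (step1 hW l⁻¹ (step1 hW 1 hx)))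
  have hm : l * l⁻¹ = 1 := mul_inv_cancel₀ hl
  generalize l⁻¹ = m at *
  convert h using 1
  ext i
  fin_cases i <;> simp <;> grind

lemma proj_l {q l : ℂ} {W : Submodule ℂ (Fin 6 → ℂ)} (hW : RhoInvariant q l W)
    (hq : q^2 + q + 1 = 0) (hl : l ≠ 0)
    {x0 x1 x2 x3 x4 x5 : ℂ} (hx : ![x0, x1, x2, x3, x4, x5] ∈ W) :
    (((l-1)^2*(l+1)*(l-q^2)*l⁻¹) * x1 + ((l-1)^2*(l+1)*q^2*l⁻¹) * x2 + ((l-1)*(l-q^2)*l⁻¹) * x4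
      + (l^3-q^2)*l⁻¹ * x5) • ![-q^2*l, l-q, 0, 0, 0, 0] ∈ W := by
  have h := step1 hW q (step1 hW (q^2) (step1 hW l⁻¹ (step1 hW 1 hx)))
  have hm : l * l⁻¹ = 1 := mul_inv_cancel₀ hl
  generalize l⁻¹ = m at *
  convert h using 1
  ext i
  fin_cases i <;> simp <;> grind

lemma proj_one {q l : ℂ} {W : Submodule ℂ (Fin 6 → ℂ)} (hW : RhoInvariant q l W)
    (hq : q^2 + q + 1 = 0) (hl : l ≠ 0)
    {x0 x1 x2 x3 x4 x5 : ℂ} (hx : ![x0, x1, x2, x3, x4, x5] ∈ W) :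
    x5 • ![(1+2*q)*(l+q)*(l+q^2)*l⁻¹, (1-q)*(l-q^2)*l⁻¹, (q-1)*(l-1)^2*l⁻¹, (q-1)*(l-1)*(l+q)*l⁻¹,
      -3*(l-1), -3*(l-1)^2*l⁻¹] ∈ W := by
  have h := step1 hW q (step1 hW l (step1 hW (q^2) (step1 hW l⁻¹ hx)))
  have hm : l * l⁻¹ = 1 := mul_inv_cancel₀ hl
  generalize l⁻¹ = m at *
  convert h using 1
  ext i
  fin_cases i <;> simp <;> grind

lemma proj_li {q l : ℂ} {W : Submodule ℂ (Fin 6 → ℂ)} (hW : RhoInvariant q l W)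
    (hq : q^2 + q + 1 = 0) (hl : l ≠ 0)
    {x0 x1 x2 x3 x4 x5 : ℂ} (hx : ![x0, x1, x2, x3, x4, x5] ∈ W) :
    (((l-1)*x4 - l*x5)*l⁻¹^4) • ![-q*(l^3-q), -(l-q)*(l-q^2), 0, (l^2-1)*(l-q^2),
      (l^2-1)*(l-q)*(l-q^2), 0] ∈ W := by
  have h := step1 hW q (step1 hW l (step1 hW (q^2) (step1 hW 1 hx)))
  have hm : l * l⁻¹ = 1 := mul_inv_cancel₀ hl
  generalize l⁻¹ = m at *
  convert h using 1
  ext i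
  fin_cases i <;> simp <;> grind

lemma proj_q2 {q l : ℂ} {W : Submodule ℂ (Fin 6 → ℂ)} (hW : RhoInvariant q l W)
    (hq : q^2 + q + 1 = 0) (hl : l ≠ 0)
    {x0 x1 x2 x3 x4 x5 : ℂ} (hx : ![x0, x1, x2, x3, x4, x5] ∈ W) :
    ∃ z ∈ W, z 2 = (l-q)*(l-q^2)*l⁻¹*(-3*x2+(1-q)*x5) ∧ z 4 = 0 ∧ z 5 = 0 := by
  have h := step1 hW q (step1 hW l (step1 hW l⁻¹ (step1 hW 1 hx)))
  have hm : l * l⁻¹ = 1 := mul_inv_cancel₀ hl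
  generalize l⁻¹ = m at *
  refine ⟨_, h, ?_, ?_, ?_⟩
  · simp; grind
  · simp
  · simp

lemma not_e0 {q l : ℂ} {W : Submodule ℂ (Fin 6 → ℂ)} (hW : RhoInvariant q l W)
    (hq : q^2 + q + 1 = 0) (hl : l ≠ 0) (hm1 : l ≠ -1) (h1 : l ≠ 1) (hlq : l ≠ q) (hlq2 : l ≠ q^2)
    (hd : Module.finrank ℂ W = 3) : ![1, 0, 0, 0, 0, 0] ∉ W := by
  intro he
  have hy := step2 hW he
  have a1 : l - 1 ≠ 0 := sub_ne_zero.2 h1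
  have a2 : l - q ≠ 0 := sub_ne_zero.2 hlq
  have a3 : l - q^2 ≠ 0 := sub_ne_zero.2 hlq2
  have a4 : l^2 - 1 ≠ 0 := by
    have : l + 1 ≠ 0 := fun h => hm1 (by linear_combination h)
    have := mul_ne_zero a1 this
    intro h; apply this; linear_combination h
  have a5 : 1 + 2 * q ≠ 0 := by
    intro h
    have : (3 : ℂ) = 0 := by linear_combination 4 * hq - (1 + 2*q) * h
    norm_num at this
  have a6 : l⁻¹ ≠ 0 := inv_ne_zero hl
  have e1 := proj_one hW hq hl hy
  have e2 := proj_li hW hq hl hy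
  obtain ⟨z, e3, z2, z4, z5⟩ := proj_q2 hW hq hl hy
  have e3 : ![z 0, z 1, z 2, z 3, z 4, z 5] ∈ W := by
    convert e3 using 1
    ext i; fin_cases i <;> rfl
  rw [z2, z4, z5] at e3
  rw [Submodule.smul_mem_iff _ (by norm_num)] at e1
  rw [Submodule.smul_mem_iff _ (by
    apply mul_ne_zero _ (pow_ne_zero _ a6)
    intro h
    have : l^2 = 0 := by linear_combination h
    exact hl (by simpa using this))] at e2
  have li : LinearIndependent ℂ ![(⟨_, he⟩ : W), ⟨_, e1⟩, ⟨_, e2⟩, ⟨_, e3⟩] := by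
    rw [Fintype.linearIndependent_iff]
    intro g hg
    have hg' := congrArg Subtype.val hg
    simp only [Fin.sum_univ_four] at hg'
    have g0 := congrFun hg' 0
    have g2 := congrFun hg' 2
    have g4 := congrFun hg' 4
    have g5 := congrFun hg' 5
    simp at g0 g2 g4 g5
    have b1 : g 1 = 0 := by
      rcases g5 with h | h
      · exact h
      · exfalso; rcases h with h | h
        · exact a1 h
        · exact hl h
    have b2 : g 2 = 0 := by
      simpa [b1, a1, a2, a3, a4] using g4
    have b3 : g 3 = 0 := by
      have c : -(3 * q) + -(1 - q) ≠ 0 := fun h => a5 (by linear_combination -h)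
      simp [b1, b2, a2, a3, hl] at g2
      rcases g2 with h | h
      · exact h
      · exact absurd (by linear_combination h) c
    have b0 : g 0 = 0 := by simpa [b1, b2, b3] using g0
    intro i
    fin_cases i <;> assumption
  have := li.fintype_card_le_finrank
  simp [hd] at this

lemma dir1 {q l : ℂ} {W : Submodule ℂ (Fin 6 → ℂ)} (hW : RhoInvariant q l W)
    (hq : q^2 + q + 1 = 0) (hl : l ≠ 0) (hm1 : l ≠ -1) (h1 : l ≠ 1) (hlq : l ≠ q) (hlq2 : l ≠ q^2)
    (hc1 : l^2 ≠ -q) (hc2 : l^2 ≠ -q^2)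
    (hd : Module.finrank ℂ W = 3) : False := by
  have n0 := not_e0 hW hq hl hm1 h1 hlq hlq2 hd
  have a1 : l - 1 ≠ 0 := sub_ne_zero.2 h1
  have a2 : l - q ≠ 0 := sub_ne_zero.2 hlq
  have a3 : l - q^2 ≠ 0 := sub_ne_zero.2 hlq2
  have a4 : l + 1 ≠ 0 := fun h => hm1 (by linear_combination h)
  have a6 : l⁻¹ ≠ 0 := inv_ne_zero hl
  have hm : l * l⁻¹ = 1 := mul_inv_cancel₀ hl
  have a7 : l^2 + q ≠ 0 := fun h => hc1 (by linear_combination h)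
  have a8 : l^2 + q^2 ≠ 0 := fun h => hc2 (by linear_combination h)
  have n1 : ![(1+2*q)*(l+q)*(l+q^2)*l⁻¹, (1-q)*(l-q^2)*l⁻¹, (q-1)*(l-1)^2*l⁻¹,
      (q-1)*(l-1)*(l+q)*l⁻¹, -3*(l-1), -3*(l-1)^2*l⁻¹] ∉ W := by
    intro h
    have h' := proj_q hW hq hl (step2 hW h)
    apply n0
    refine (Submodule.smul_mem_iff _ ?_).1 h'
    have : 3 * (l^2+q) * (l^2+q^2) * l⁻¹^2 ≠ 0 :=
      mul_ne_zero (mul_ne_zero (mul_ne_zero (by norm_num) a7) a8) (pow_ne_zero _ a6)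
    convert this using 1
    clear h h'
    generalize l⁻¹ = m at *
    clear this n0 hd hW hm1 h1 hlq hlq2 hc1 hc2 a1 a2 a3 a4 a6 a7 a8
    grind
  have n2 : ![-q^2*l, l-q, 0, 0, 0, 0] ∉ W := by
    intro h
    have h' := proj_one hW hq hl (step2 hW h)
    apply n1
    refine (Submodule.smul_mem_iff _ ?_).1 h'
    have : (1 : ℂ) ≠ 0 := one_ne_zero
    convert this using 1
    linear_combination (q-1)*hq
  -- every vector of `W` is killed by three functionals
  have key : ∀ x ∈ W, x 5 = 0 ∧ (l-1)*(l+1)*(l-q^2) * x 1 + (l-1)*(l+1)*q^2 * x 2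
      + (l-q^2) * x 4 = 0 ∧ -3 * (l - q) * (l - q^2) * l⁻¹ * x 0 - 3 * q^2 * (l - q^2) * x 1
      - (1 + 2 * q) * (l + 1) * (l - q^2) * l⁻¹ * x 2 + (1 - q) * (l - q) * (l - q^2) * l⁻¹ * x 3
      - (1 + 2 * q) * (l - 1) * l⁻¹ * x 4 = 0 := by
    intro x hx
    have hx' : ![x 0, x 1, x 2, x 3, x 4, x 5] ∈ W := by
      convert hx using 1
      ext i; fin_cases i <;> rfl
    have k5 : x 5 = 0 := by
      by_contra hne
      exact n1 ((Submodule.smul_mem_iff _ hne).1 (proj_one hW hq hl hx'))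
    refine ⟨k5, ?_, ?_⟩
    · by_contra hne
      refine n2 ((Submodule.smul_mem_iff _ ?_).1 (proj_l hW hq hl hx'))
      have := mul_ne_zero (mul_ne_zero hne a1) a6
      convert this using 1
      rw [k5]; ring
    · by_contra hne
      refine n0 ((Submodule.smul_mem_iff _ ?_).1 (proj_q hW hq hl hx'))
      convert hne using 1
      rw [k5]; ring
  let g : W →ₗ[ℂ] (Fin 3 → ℂ) := (LinearMap.funLeft ℂ ℂ (![2, 3, 4] : Fin 3 → Fin 6)).comp W.subtype
  have gi : Function.Injective g := by
    rw [injective_iff_map_eq_zero]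
    rintro ⟨x, hx⟩ h
    obtain ⟨k5, k1, k0⟩ := key x hx
    have k2 : x 2 = 0 := congrFun h 0
    have k3 : x 3 = 0 := congrFun h 1
    have k4 : x 4 = 0 := congrFun h 2
    have k1 : x 1 = 0 := by simpa [k2, k4, a1, a3, a4] using k1
    have k0 : x 0 = 0 := by simpa [k1, k2, k3, k4, a2, a3, a6, hl] using k0
    apply Subtype.ext
    ext i
    fin_cases i <;> assumption
  have gs : Function.Surjective g :=
    (LinearMap.injective_iff_surjective_of_finrank_eq_finrank (by simp [hd])).1 gi
  obtain ⟨⟨x, hx⟩, hgx⟩ := gs ![0, 1, 0]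
  obtain ⟨k5, k1, k0⟩ := key x hx
  have k2 : x 2 = 0 := congrFun hgx 0
  have k3 : x 3 = 1 := congrFun hgx 1
  have k4 : x 4 = 0 := congrFun hgx 2
  have k1 : x 1 = 0 := by simpa [k2, k4, a1, a3, a4] using k1
  have hx' : ![x 0, x 1, x 2, x 3, x 4, x 5] ∈ W := by
    convert hx using 1
    ext i; fin_cases i <;> rfl
  have k6 := (key _ (step2 hW hx')).1
  simp [k1, k2, k3, k4, k5] at k6
  have hx0 : x 0 = 1 := by linear_combination -k6
  rw [k1, k2, k3, k4, hx0] at k0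
  have k7 : ((l - q) * (l - q^2) * l⁻¹) * (q + 2) = 0 := by linear_combination -k0
  have k8 : q + 2 = 0 := by simpa [a2, a3, hl] using k7
  have : (3 : ℂ) = 0 := by linear_combination hq - (q - 1) * k8
  norm_num at this

lemma dir2 {q l : ℂ} (N : Matrix (Fin 6) (Fin 3) ℂ) (X Y : Matrix (Fin 3) (Fin 3) ℂ)
    (L : Matrix (Fin 3) (Fin 6) ℂ) (hL : L * N = 1)
    (hX : M1 q l * N = N * X) (hY : M2 q l * N = N * Y) :
    ∃ W : Submodule ℂ (Fin 6 → ℂ), RhoInvariant q l W ∧ Module.finrank ℂ W = 3 := by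
  refine ⟨LinearMap.range N.mulVecLin, ⟨?_, ?_⟩, ?_⟩
  · rintro _ ⟨y, rfl⟩
    exact ⟨X *ᵥ y, by simp [hX]⟩
  · rintro _ ⟨y, rfl⟩
    exact ⟨Y *ᵥ y, by simp [hY]⟩
  · rw [LinearMap.finrank_range_of_inj]
    · simp
    · intro a b h
      have := congrArg (L *ᵥ ·) h
      simpa [hL] using this

lemma case1 {l q : ℂ} (hl : l ≠ 0) (h : l^4 - l^2 + 1 = 0) (hq : q = -l^2) :
    ∃ W : Submodule ℂ (Fin 6 → ℂ), RhoInvariant q l W ∧ Module.finrank ℂ W = 3 := by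
  have hi : l⁻¹ = l - l^3 := by
    apply inv_eq_of_mul_eq_one_right; linear_combination -h
  subst hq
  refine dir2 !![1, 0, 0; l^2+l^3, 0, 0; 0, 1, 0; 0, -l, 0; 0, 0, 1; 0, 0, 1-l+l^3]
    !![l, -1+l+l^2-l^3, 1-l; 0, -1+l^2, 1-l+l^3; 0, 0, 1]
    !![1, 0, 0; l^3, -1+l^2, 0; 1+l-l^2-l^3, l^2, l]
    !![1, 0, 0, 0, 0, 0; 0, 0, 1, 0, 0, 0; 0, 0, 0, 0, 1, 0] ?_ ?_ ?_
  · ext i j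
    fin_cases i <;> fin_cases j <;> simp [Matrix.mul_apply, Fin.sum_univ_six]
  · ext i j
    fin_cases i <;> fin_cases j <;>
      simp [Matrix.mul_apply, Fin.sum_univ_six, Fin.sum_univ_three, M1, div_eq_mul_inv, hi] <;> grind
  · ext i j
    fin_cases i <;> fin_cases j <;>
      simp [Matrix.mul_apply, Fin.sum_univ_six, Fin.sum_univ_three, M2, div_eq_mul_inv, hi] <;> grind

lemma case2 {l q : ℂ} (hl : l ≠ 0) (h : l^4 - l^2 + 1 = 0) (hq : q = l^2 - 1) :
    ∃ W : Submodule ℂ (Fin 6 → ℂ), RhoInvariant q l W ∧ Module.finrank ℂ W = 3 := by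
  have hi : l⁻¹ = l - l^3 := by
    apply inv_eq_of_mul_eq_one_right; linear_combination -h
  subst hq
  refine dir2 !![1, 0, 0; -1/2*l^2-1/2*l^3, l+l^2-l^3, 3/2-1/2*l-1/2*l^2+3/2*l^3; 0, 1, 0; 0, 0, 1;
      1/2+1/2*l, 1-l^3, 1+l-1/2*l^2-1/2*l^3; -l^3, 1-2*l+l^2, l-2*l^2+l^3]
    !![-1/2+l+3/2*l^2-3/2*l^3, 2-2*l+l^3, -1/2+5/2*l-3*l^2+3/2*l^3; -l^3, 1-2*l, l-2*l^2+l^3;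
      1/2*l+1/2*l^2-l^3, 2-l, 1/2+2*l-5/2*l^2+1/2*l^3]
    !![1, 0, 0; -1+1/2*l^2-1/2*l^3, l-l^3, 3/2-1/2*l-1/2*l^2+3/2*l^3; l^2, 0, -l^2]
    !![1, 0, 0, 0, 0, 0; 0, 0, 1, 0, 0, 0; 0, 0, 0, 1, 0, 0] ?_ ?_ ?_
  · ext i j
    fin_cases i <;> fin_cases j <;> simp [Matrix.mul_apply, Fin.sum_univ_six]
  · ext i j
    fin_cases i <;> fin_cases j <;>
      simp [Matrix.mul_apply, Fin.sum_univ_six, Fin.sum_univ_three, M1, div_eq_mul_inv, hi] <;> grind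
  · ext i j
    fin_cases i <;> fin_cases j <;>
      simp [Matrix.mul_apply, Fin.sum_univ_six, Fin.sum_univ_three, M2, div_eq_mul_inv, hi] <;> grind

theorem stmt7 (q l : ℂ) (hq3 : q^3 = 1) (hq1 : q ≠ 1) (hl0 : l ≠ 0)
    (hm1 : l ≠ -1) (h1 : l ≠ 1) (hq : l ≠ q) (hq2 : l ≠ q^2) :
    (¬ ∃ W : Submodule ℂ (Fin 6 → ℂ), RhoInvariant q l W ∧ Module.finrank ℂ W = 3) ↔
      (l^2 ≠ -q ∧ l^2 ≠ -q^2) := by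
  have hqq : q^2 + q + 1 = 0 := by
    have : (q - 1) * (q^2 + q + 1) = 0 := by linear_combination hq3
    exact (mul_eq_zero.1 this).resolve_left (sub_ne_zero.2 hq1)
  constructor
  · intro h
    refine ⟨fun h' => h (case1 hl0 ?_ ?_), fun h' => h (case2 hl0 ?_ ?_)⟩
    · linear_combination (l^2 - q - 1) * h' + hqq
    · linear_combination h'
    · linear_combination (l^2 - q^2 - 1) * h' + hqq + q * hq3
    · linear_combination -h' + hqq
  · rintro ⟨hc1, hc2⟩ ⟨W, hW, hd⟩
    exact dir1 hW hqq hl0 hm1 h1 hq hq2 hc1 hc2 hd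
end

section
/- (Proposition 3.5) If λ₁³ ≠ q², then there is no ρ-invariant subspace of ℂ⁶ of dimension 5. -/
open Matrix Polynomial

lemma core_aux (q l a b x1 x2 x3 x4 x5 x6 : ℂ) (hq0 : q^2 + q + 1 = 0) (hl0 : l ≠ 0)
    (hm1 : l + 1 ≠ 0) (h1 : l - 1 ≠ 0) (hq : l - q ≠ 0) (hq2 : l - q^2 ≠ 0)
    (A1 : q * x1 = a * x1)
    (A2 : -q^2*l*x1 + l * x2 = a * x2)
    (A3 : q^2*x1 + q^2*x2 + q^2*x3 = a * x3)
    (A4 : q^2*x1 + q^2*x4 = a * x4)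
    (A5 : -q^2*x1 + x2 - q^2*x4 + x5 = a * l * x5)
    (A6 : x1+x2+x3+x4+x5+x6 = a * x6)
    (B1 : l*x1 - x2 + l*q*x3 - l*q^2*x4 + l^2*x5 - l*x6 = b*l*x1)
    (B2 : x2 + l*x3 - l^2*x5 - l*q^2*x6 = b*l*x2)
    (B3 : q^2*x3 - q*x6 = b*x3)
    (B4 : q^2*x4 - l*x5 + x6 = b*x4)
    (B5 : l*x5 + q^2*x6 = b*x5)
    (B6 : q*x6 = b*x6) :
    x1 = 0 ∧ x2 = 0 ∧ x3 = 0 ∧ x4 = 0 ∧ x5 = 0 ∧ x6 = 0 := by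
  have hq3 : q^3 = 1 := by linear_combination (q-1)*hq0
  have q0 : q ≠ 0 := by rintro rfl; norm_num at hq0
  have q1 : q - 1 ≠ 0 := by
    intro h
    have : q = 1 := by linear_combination h
    subst this; norm_num at hq0
  -- contradiction-producing cancellation
  by_cases hx1 : x1 = 0
  · subst hx1
    by_cases hx6 : x6 = 0
    · subst hx6
      have hx5 : x5 = 0 := by
        by_contra h5
        have hb : b = l := by
          apply mul_right_cancel₀ h5; linear_combination -B5
        subst hb
        have h3 : x3 = 0 := by
          apply mul_left_cancel₀ hq2; linear_combination -B3
        subst h3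
        have h2 : x2 = 0 := by
          apply mul_left_cancel₀ (pow_ne_zero 2 q0); linear_combination A3
        subst h2
        have : b^2 * x5 = 0 := by linear_combination -B2
        exact mul_ne_zero (pow_ne_zero 2 hl0) h5 this
      subst hx5
      have e2 : x2 = q^2*x4 := by linear_combination A5
      have e3 : x3 = q*x4 := by linear_combination A6 - e2 - x4*hq0
      have h4 : x4 = 0 := by
        by_contra h4
        have hb : b = q^2 := by
          apply mul_right_cancel₀ h4; linear_combination -B4
        subst hb; subst e2; subst e3
        have : q^2 * x4 = 0 := by linear_combination B2 + l*q*x4*hq3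
        exact (mul_ne_zero (pow_ne_zero 2 q0) h4) this
      subst h4
      simp_all
    · exfalso
      have hb : b = q := by
        apply mul_right_cancel₀ hx6; linear_combination -B6
      subst hb
      have e3 : (b-1)*x3 = x6 := by
        apply mul_left_cancel₀ q0; linear_combination B3
      have e5 : (b-l)*x5 = b^2*x6 := by linear_combination -B5
      have e4 : (b-l)*(b^2-b)*x4 = -b*(l+1)*x6 := by
        linear_combination (b-l)*B4 + l*e5 + l*x6*hq0
      have h4 : x4 ≠ 0 := by
        rintro rfl
        have : b*(l+1)*x6 = 0 := by linear_combination e4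
        exact mul_ne_zero (mul_ne_zero q0 hm1) hx6 this
      have ha : a = b^2 := by
        apply mul_right_cancel₀ h4; linear_combination -A4
      subst ha
      have h2 : x2 = 0 := by
        apply mul_left_cancel₀ hq2; linear_combination A2
      subst h2
      have e : x3 = l*x5 + b^2*x6 := by
        apply mul_left_cancel₀ hl0; linear_combination B2
      have : (l-1)*x6 = 0 := by grind
      exact mul_ne_zero h1 hx6 this
  · exfalso
    have ha : a = q := by
      apply mul_right_cancel₀ hx1; linear_combination -A1
    subst ha
    have e2 : (l-a)*x2 = a^2*l*x1 := by linear_combination A2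
    have e4 : (1-a)*x4 = a*x1 := by
      apply mul_left_cancel₀ q0; linear_combination -A4
    have e3' : (1-a)*x3 = a*(x1+x2) := by
      apply mul_left_cancel₀ q0; linear_combination -A3
    have e3 : (a-1)*(l-a)*x3 = a^2*(l+1)*x1 := by grind
    by_cases hx6 : x6 = 0
    · subst hx6
      have h3 : x3 ≠ 0 := by
        rintro rfl
        have : a^2*(l+1)*x1 = 0 := by linear_combination -e3
        exact mul_ne_zero (mul_ne_zero (pow_ne_zero 2 q0) hm1) hx1 this
      have hb : b = a^2 := by
        apply mul_right_cancel₀ h3; linear_combination -B3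
      subst hb
      have h5 : x5 = 0 := by
        apply mul_left_cancel₀ hq2; linear_combination B5
      subst h5
      have : (l-1)*x1 = 0 := by grind
      exact mul_ne_zero h1 hx1 this
    · have hb : b = a := by
        apply mul_right_cancel₀ hx6; linear_combination -B6
      subst hb
      have e6' : x6 = (b-1)*x3 := by
        apply mul_left_cancel₀ q0; linear_combination -B3
      have e6 : (l-b)*x6 = b^2*(l+1)*x1 := by linear_combination (l-b)*e6' + e3
      have e5' : (l-b)*x5 = -b^2*x6 := by linear_combination B5
      have e5 : (l-b)^2*x5 = -b*(l+1)*x1 := by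
        linear_combination (l-b)*e5' - b^2*e6 - b*(l+1)*x1*hq3
      have E1' : -b^2*x1 = l*x5 - x6 := by linear_combination B4 + b*e4
      have E1 : (l^2+b)*x1 = 0 := by
        have : (l-b)^2*(-b^2*x1) = l*(-b*(l+1)*x1) - (l-b)*(b^2*(l+1)*x1) := by
          linear_combination (l-b)^2*E1' + l*e5 - (l-b)*e6
        grind
      have E2 : (1-b^2-2*b^2*l)*x1 = 0 := by
        have : (1-b)*(l-b)^2*(-b^2*x1) + (1-b)*(l-b)*(b^2*l*x1) - b^2*(l-b)^2*(b*x1)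
            = (1-b)*(b*l-1)*(-b*(l+1)*x1) := by
          linear_combination (1-b)*(l-b)^2*A5 - (1-b)*(l-b)*e2 + b^2*(l-b)^2*e4
            + (1-b)*(b*l-1)*e5
        have h' : (l-b)*((1-b^2-2*b^2*l)*x1) = 0 := by grind
        exact (mul_eq_zero.1 h').resolve_left hq
      have F1 := (mul_eq_zero.1 E1).resolve_right hx1
      have F2 := (mul_eq_zero.1 E2).resolve_right hx1
      grind

set_option maxHeartbeats 2000000 in
theorem stmt12 (q l : ℂ) (hq3 : q^3 = 1) (hq1 : q ≠ 1) (hl0 : l ≠ 0)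
    (hm1 : l ≠ -1) (h1 : l ≠ 1) (hq : l ≠ q) (hq2 : l ≠ q^2) (hcube : l^3 ≠ q^2) :
    ¬ ∃ W : Submodule ℂ (Fin 6 → ℂ), RhoInvariant q l W ∧ Module.finrank ℂ W = 5 := by
  rintro ⟨W, ⟨hW1, hW2⟩, hd⟩
  have hlt : W < ⊤ := by
    rw [lt_top_iff_ne_top]
    rintro rfl
    simp at hd
  obtain ⟨f, hf0, hf⟩ := Submodule.exists_le_ker_of_lt_top W hlt
  obtain ⟨w, hw⟩ : ∃ w, f w ≠ 0 := by
    by_contra! h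
    exact hf0 (LinearMap.ext h)
  have hker : W = LinearMap.ker f := by
    apply Submodule.eq_of_le_of_finrank_le hf
    rw [hd]
    have h := Submodule.finrank_lt (s := LinearMap.ker f) (by
      rw [Ne, LinearMap.ker_eq_top]; exact hf0)
    simp at h
    omega
  have key : ∀ M : Matrix (Fin 6) (Fin 6) ℂ, (∀ x ∈ W, M.mulVec x ∈ W) →
      ∃ a : ℂ, ∀ j, ∑ i, M i j * f (Pi.single i 1) = a * f (Pi.single j 1) := by
    intro M hM
    refine ⟨f (M.mulVec w) / f w, fun j => ?_⟩
    set x : Fin 6 → ℂ := Pi.single j 1 with hx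
    have hmem : x - (f x / f w) • w ∈ W := by
      rw [hker, LinearMap.mem_ker, map_sub, map_smul, smul_eq_mul]
      field_simp; ring
    have h2 := hM _ hmem
    rw [hker, LinearMap.mem_ker, Matrix.mulVec_sub, Matrix.mulVec_smul, map_sub, map_smul,
      smul_eq_mul] at h2
    have h3 : f (M.mulVec x) = ∑ i, M i j * f (Pi.single i 1) := by
      have : M.mulVec x = ∑ i, M i j • (Pi.single i 1 : Fin 6 → ℂ) := by
        ext k
        simp [hx, Finset.sum_apply, Pi.single_apply]
      rw [this, map_sum]
      simp
    rw [← h3]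
    linear_combination h2
  obtain ⟨a, ha⟩ := key _ hW1
  obtain ⟨b, hb⟩ := key _ hW2
  have hv : ¬ ∀ i, f (Pi.single i 1) = 0 := by
    intro h
    apply hf0
    apply LinearMap.pi_ext'
    intro i
    ext
    simpa using h i
  generalize hvf : (fun i : Fin 6 => f (Pi.single i 1)) = v at *
  have hvf' : ∀ i, f (Pi.single i 1) = v i := fun i => congrFun hvf i
  simp only [hvf'] at ha hb hv
  have hq0 : q^2 + q + 1 = 0 := by
    apply mul_left_cancel₀ (sub_ne_zero.2 hq1); linear_combination hq3
  have A1 := ha 0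
  have A2 := ha 1
  have A3 := ha 2
  have A4 := ha 3
  have A5 := ha 4
  have A6 := ha 5
  have B1 := hb 0
  have B2 := hb 1
  have B3 := hb 2
  have B4 := hb 3
  have B5 := hb 4
  have B6 := hb 5
  simp [M1, Fin.sum_univ_six] at A1 A2 A3 A4 A5 A6
  simp [M2, Fin.sum_univ_six] at B1 B2 B3 B4 B5 B6
  clear hvf hvf' ha hb key hker hf hlt hd hW1 hW2 hw
  apply hv
  obtain ⟨c0, c1, c2, c3, c4, c5⟩ := core_aux q l a b (v 0) (v 1) (v 2) (v 3) (v 4) (v 5) hq0 hl0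
    (fun h => hm1 (by linear_combination h)) (sub_ne_zero.2 h1) (sub_ne_zero.2 hq) (sub_ne_zero.2 hq2)
    (by rcases A1 with h | h <;> rw [h] <;> ring) (by linear_combination A2) (by linear_combination A3)
    (by linear_combination A4) (by field_simp at A5; linear_combination A5)
    (by linear_combination A6) (by field_simp at B1; linear_combination B1)
    (by field_simp at B2; linear_combination B2) (by linear_combination B3)
    (by linear_combination B4) (by linear_combination B5) (by rcases B6 with h | h <;> rw [h] <;> ring)
  intro i
  fin_cases i <;> assumption
end

section
/- (Theorem 3.6) For λ₁ ∈ ℂ \ {0, −1, 1, q, q²}, the representation ρ is irreducible (i.e., the only ρ-invariant subspaces of ℂ⁶ are {0} and ℂ⁶) if and only if λ₁² ≠ −q, λ₁² ≠ −q², λ₁³ ≠ q and λ₁³ ≠ q². -/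
open Matrix Polynomial

set_option linter.unusedVariables false

namespace Stmt13Aux

/-- If a sum of eigenvectors with distinct eigenvalues lies in an invariant subspace,
then so does each summand. -/
lemma mem_of_sum_mem {E ι : Type*} [AddCommGroup E] [Module ℂ E] [DecidableEq ι]
    (f : E →ₗ[ℂ] E) (W : Submodule ℂ E) (hW : ∀ x ∈ W, f x ∈ W) (μ : ι → ℂ)
    (hμ : Function.Injective μ) (s : Finset ι) :
    ∀ x : ι → E, (∀ i, f (x i) = μ i • x i) → ∑ i ∈ s, x i ∈ W → ∀ i ∈ s, x i ∈ W := by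
  induction s using Finset.induction_on with
  | empty => intro x _ _ i hi; simp at hi
  | insert a s ha ih =>
    intro x hx hs
    have key : ∑ i ∈ s, (μ i - μ a) • x i ∈ W := by
      have h := W.sub_mem (hW _ hs) (W.smul_mem (μ a) hs)
      rw [Finset.sum_insert ha] at h
      convert h using 1
      simp only [map_add, map_sum, hx, smul_add, Finset.smul_sum, sub_smul,
        Finset.sum_sub_distrib]
      abel
    have h2 := ih (fun i => (μ i - μ a) • x i)
      (fun i => by simp only [map_smul, hx, smul_comm (μ i)]) key
    have h3 : ∀ i ∈ s, x i ∈ W := by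
      intro i hi
      have hne : μ i - μ a ≠ 0 := by
        intro h
        have := hμ (sub_eq_zero.mp h)
        subst this
        exact ha hi
      exact (W.smul_mem_iff hne).mp (h2 i hi)
    intro i hi
    rcases Finset.mem_insert.mp hi with rfl | hi
    · rw [Finset.sum_insert ha] at hs
      exact (W.add_mem_iff_left (W.sum_mem h3)).mp hs
    · exact h3 i hi

/-- Eigenvectors of `M1`. -/
def v0 : Fin 6 → ℂ := ![1, 0, 0, 0, 0, 0]
def v1 (q l : ℂ) : Fin 6 → ℂ := ![(1+q)*l, l-q, 0, 0, 0, 0]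
def v2 (q l : ℂ) : Fin 6 → ℂ :=
  ![-1-q-q*l^3, -1-l-l^2, 0, -1-q-l+(1+q)*l^2+l^3, -1-l+l^3+l^4, 0]
def v3 (q l : ℂ) : Fin 6 → ℂ :=
  ![(1+2*q)*(-1+l-l^2), -2-q+(q-1)*l, (1-q)*(l-1)^2, -1-2*q+3*q*l+(1-q)*l^2,
    3*l^2-3*l, 3*(l-1)^2]
def v4 (q l : ℂ) : Fin 6 → ℂ := ![q+l, q-1, q-1+(1+2*q)*l, 0, 0, 0]
def v5 (q : ℂ) : Fin 6 → ℂ := ![1+q, 0, 0, 1+2*q, 0, 0]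

/-- Unnormalised coordinate functionals dual to the eigenvectors. -/
def U0 (q l : ℂ) (x : Fin 6 → ℂ) : ℂ :=
  3*(l-q)*(l-q^2)*x 0 - 3*(1+q)*l*(l-q^2)*x 1 + (1+2*q)*(1+l)*(l-q^2)*x 2
    + (q-1)*(l-q)*(l-q^2)*x 3 + (1+2*q)*(l-1)*x 4 - (1+2*q)*l*x 5
def U1 (q l : ℂ) (x : Fin 6 → ℂ) : ℂ :=
  (l^2-1)*(l-1)*(l-q^2)*x 1 - (1+q)*(l^2-1)*(l-1)*x 2 + (l-1)*(l-q^2)*x 4 + (1+q+l^3)*x 5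
def U2 (l : ℂ) (x : Fin 6 → ℂ) : ℂ := (l-1)*x 4 - l*x 5
def U3 (x : Fin 6 → ℂ) : ℂ := x 5
def U4 (q : ℂ) (x : Fin 6 → ℂ) : ℂ := -(1+2*q)*x 2 + (1+q)*x 5
def U5 (q l : ℂ) (x : Fin 6 → ℂ) : ℂ :=
  -(1+2*q)*(l-q)*x 3 + (1+2*q)*x 4 + (-q+(1+q)*l)*x 5


lemma e0 (q l : ℂ) (hq : q^2 + q + 1 = 0) (hl : l ≠ 0) : (M1 q l).mulVec v0 = q • v0 := by
  ext i; fin_cases i <;> simp [M1, v0, mulVec, dotProduct, Fin.sum_univ_succ]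
lemma e1 (q l : ℂ) (hq : q^2 + q + 1 = 0) (hl : l ≠ 0) : (M1 q l).mulVec (v1 q l) = l • v1 q l := by
  ext i; fin_cases i <;> simp [M1, v1, mulVec, dotProduct, Fin.sum_univ_succ] <;> grind
lemma e2 (q l : ℂ) (hq : q^2 + q + 1 = 0) (hl : l ≠ 0) : (M1 q l).mulVec (v2 q l) = (1/l) • v2 q l := by
  ext i; fin_cases i <;> simp [M1, v2, mulVec, dotProduct, Fin.sum_univ_succ] <;> grind
lemma e3 (q l : ℂ) (hq : q^2 + q + 1 = 0) (hl : l ≠ 0) : (M1 q l).mulVec (v3 q l) = (1:ℂ) • v3 q l := by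
  ext i; fin_cases i <;> simp [M1, v3, mulVec, dotProduct, Fin.sum_univ_succ] <;> grind
lemma e4 (q l : ℂ) (hq : q^2 + q + 1 = 0) (hl : l ≠ 0) : (M1 q l).mulVec (v4 q l) = (q^2) • v4 q l := by
  ext i; fin_cases i <;> simp [M1, v4, mulVec, dotProduct, Fin.sum_univ_succ] <;> grind
lemma e5 (q l : ℂ) (hq : q^2 + q + 1 = 0) (hl : l ≠ 0) : (M1 q l).mulVec (v5 q) = (q^2) • v5 q := by
  ext i; fin_cases i <;> simp [M1, v5, mulVec, dotProduct, Fin.sum_univ_succ] <;> grind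

lemma n01 (q l : ℂ) (hq : q^2 + q + 1 = 0) (hl : l ≠ 0) : U0 q l ((M2 q l).mulVec (v1 q l)) = (1+2*q)*(l^2+q) := by
  simp [M2, U0, v1, mulVec, dotProduct, Fin.sum_univ_succ]; grind
lemma n02 (q l : ℂ) (hq : q^2 + q + 1 = 0) (hl : l ≠ 0) : U0 q l ((M2 q l).mulVec (v2 q l)) = (1+2*q)*l*(l^2+q^2)*(l^3-q) := by
  simp [M2, U0, v2, mulVec, dotProduct, Fin.sum_univ_succ]; grind
lemma n03 (q l : ℂ) (hq : q^2 + q + 1 = 0) (hl : l ≠ 0) : U0 q l ((M2 q l).mulVec (v3 q l)) = 3*(l^2+q)*(l^2+q^2) := by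
  simp [M2, U0, v3, mulVec, dotProduct, Fin.sum_univ_succ]; grind
lemma n10 (q l : ℂ) (hq : q^2 + q + 1 = 0) (hl : l ≠ 0) : l * U1 q l ((M2 q l).mulVec v0) = -(l^3-q^2) := by
  simp [M2, U1, v0, mulVec, dotProduct, Fin.sum_univ_succ]; grind
lemma n20 (q l : ℂ) (hq : q^2 + q + 1 = 0) (hl : l ≠ 0) : U2 l ((M2 q l).mulVec v0) = l^2 := by
  simp [M2, U2, v0, mulVec, dotProduct, Fin.sum_univ_succ]; grind
lemma n30 (q l : ℂ) (hq : q^2 + q + 1 = 0) (hl : l ≠ 0) : U3 ((M2 q l).mulVec v0) = -1 := by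
  simp [M2, U3, v0, mulVec, dotProduct, Fin.sum_univ_succ]
lemma n40 (q l : ℂ) (hq : q^2 + q + 1 = 0) (hl : l ≠ 0) : U4 q ((M2 q l).mulVec v0) = 1 := by
  simp [M2, U4, v0, mulVec, dotProduct, Fin.sum_univ_succ]; grind
lemma n50 (q l : ℂ) (hq : q^2 + q + 1 = 0) (hl : l ≠ 0) : U5 q l ((M2 q l).mulVec v0) = l+q^2 := by
  simp [M2, U5, v0, mulVec, dotProduct, Fin.sum_univ_succ]; grind
lemma n41 (q l : ℂ) (hq : q^2 + q + 1 = 0) (hl : l ≠ 0) : U4 q ((M2 q l).mulVec (v1 q l)) = -1 := by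
  simp [M2, U4, v1, mulVec, dotProduct, Fin.sum_univ_succ]; grind
lemma n51 (q l : ℂ) (hq : q^2 + q + 1 = 0) (hl : l ≠ 0) : U5 q l ((M2 q l).mulVec (v1 q l)) = -q*(l+1) := by
  simp [M2, U5, v1, mulVec, dotProduct, Fin.sum_univ_succ]; grind
lemma n2 (q l : ℂ) (hq : q^2 + q + 1 = 0) (hl : l ≠ 0) (a b : ℂ) : U2 l ((M2 q l).mulVec (a • v4 q l + b • v5 q))
    = l^2*(a*(l+q^2) - q*b) := by
  simp [M2, U2, v4, v5, mulVec, dotProduct, Fin.sum_univ_succ]; grind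
lemma n3 (q l : ℂ) (hq : q^2 + q + 1 = 0) (hl : l ≠ 0) (a b : ℂ) : U3 ((M2 q l).mulVec (a • v4 q l + b • v5 q))
    = a*(1+q)*(l+q) + q*b := by
  simp [M2, U3, v4, v5, mulVec, dotProduct, Fin.sum_univ_succ]; grind

lemma decomp (q l : ℂ) (hq : q^2 + q + 1 = 0) (hl : l ≠ 0)
    (hm1 : l + 1 ≠ 0) (h1 : l - 1 ≠ 0) (hlq : l - q ≠ 0) (hlq2 : l - q^2 ≠ 0)
    (x : Fin 6 → ℂ) :
    x = (U0 q l x / (3*(l-q)*(l-q^2))) • v0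
      + (U1 q l x / ((l+1)*(l-1)^2*(l-q)*(l-q^2))) • v1 q l
      + (U2 l x / ((l+1)*(l-1)^2*(l-q)*(l-q^2))) • v2 q l
      + (U3 x / (3*(l-1)^2)) • v3 q l
      + ((U4 q x / (3*(l-q^2))) • v4 q l + (U5 q l x / (3*(l-q))) • v5 q) := by
  have hP : (l-q)*(l-q^2) = l^2+l+1 := by grind
  ext i; fin_cases i <;>
    simp [U0, U1, U2, U3, U4, U5, v0, v1, v2, v3, v4, v5] <;> field_simp <;> grind


lemma irreducible (q l : ℂ) (hq : q^2 + q + 1 = 0) (hl : l ≠ 0)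
    (hm1 : l + 1 ≠ 0) (h1 : l - 1 ≠ 0) (hlq : l - q ≠ 0) (hlq2 : l - q^2 ≠ 0)
    (hA : l^2 + q ≠ 0) (hB : l^2 + q^2 ≠ 0) (hC : l^3 - q ≠ 0) (hD : l^3 - q^2 ≠ 0)
    (W : Submodule ℂ (Fin 6 → ℂ)) (hW : RhoInvariant q l W) : W = ⊥ ∨ W = ⊤ := by
  obtain ⟨hW1, hW2⟩ := hW
  have h12q : 1 + 2*q ≠ 0 := by
    intro h
    have h3 : (3 : ℂ) = 0 := by linear_combination 4*hq - (1 + 2*q)*h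
    norm_num at h3
  have hq0 : q ≠ 0 := by rintro rfl; norm_num at hq
  have hq1 : q - 1 ≠ 0 := by
    intro h
    have h3 : (3 : ℂ) = 0 := by linear_combination hq - (q + 2)*h
    norm_num at h3
  have hinj : Function.Injective (![q, l, 1/l, 1, q^2] : Fin 5 → ℂ) := by
    have hqi : 1/l ≠ q := by
      intro h; rw [div_eq_iff hl] at h; apply hlq2; grind
    have hqi2 : 1/l ≠ q^2 := by
      intro h; rw [div_eq_iff hl] at h; apply hlq; grind
    have hli : 1/l ≠ l := by
      intro h; rw [div_eq_iff hl] at h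
      have : (l+1)*(l-1) = 0 := by linear_combination -h
      simp_all
    have hl1 : 1/l ≠ 1 := by
      intro h; rw [div_eq_iff hl] at h; apply h1; linear_combination -h
    have a1 : l ≠ q := sub_ne_zero.mp hlq
    have a2 : l ≠ q^2 := sub_ne_zero.mp hlq2
    have a3 : l ≠ 1 := sub_ne_zero.mp h1
    have a4 : q ≠ 1 := sub_ne_zero.mp hq1
    have a5 : q^2 ≠ 1 := by
      intro h; have : q + 2 = 0 := by linear_combination hq - h
      apply a4; grind
    have a6 : q^2 ≠ q := by
      intro h; apply h12q; linear_combination hq - h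
    intro i j hij
    fin_cases i <;> fin_cases j <;> first | rfl | (exfalso; simp at hij; grind)
  -- the eigencomponents of an element of `W` lie in `W`
  have comp : ∀ x ∈ W, (U0 q l x ≠ 0 → v0 ∈ W) ∧ (U1 q l x ≠ 0 → v1 q l ∈ W) ∧
      (U2 l x ≠ 0 → v2 q l ∈ W) ∧ (U3 x ≠ 0 → v3 q l ∈ W) ∧
      ((U4 q x / (3*(l-q^2))) • v4 q l + (U5 q l x / (3*(l-q))) • v5 q) ∈ W := by
    intro x hx
    have hd := decomp q l hq hl hm1 h1 hlq hlq2 x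
    have key := mem_of_sum_mem (M1 q l).mulVecLin W (by simpa using hW1)
      ![q, l, 1/l, 1, q^2] hinj Finset.univ
      ![(U0 q l x / (3*(l-q)*(l-q^2))) • v0,
        (U1 q l x / ((l+1)*(l-1)^2*(l-q)*(l-q^2))) • v1 q l,
        (U2 l x / ((l+1)*(l-1)^2*(l-q)*(l-q^2))) • v2 q l,
        (U3 x / (3*(l-1)^2)) • v3 q l,
        (U4 q x / (3*(l-q^2))) • v4 q l + (U5 q l x / (3*(l-q))) • v5 q]
      (by
        intro i
        fin_cases i
        · simp [e0 q l hq hl, smul_comm q]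
        · simp [e1 q l hq hl, smul_comm l]
        · simp [e2 q l hq hl, smul_comm l⁻¹]
        · simp [e3 q l hq hl]
        · simp [mulVec_add, mulVec_smul, e4 q l hq hl, e5 q l hq hl, smul_comm (q^2)])
      (by
        rw [Fin.sum_univ_five]
        simp only [Matrix.cons_val]
        rw [← hd]; exact hx)
    have k0 := key 0 (Finset.mem_univ _)
    have k1 := key 1 (Finset.mem_univ _)
    have k2 := key 2 (Finset.mem_univ _)
    have k3 := key 3 (Finset.mem_univ _)
    have k4 := key 4 (Finset.mem_univ _)
    simp only [Matrix.cons_val] at k0 k1 k2 k3 k4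
    have hd0 : 3*(l-q)*(l-q^2) ≠ 0 :=
      mul_ne_zero (mul_ne_zero three_ne_zero hlq) hlq2
    have hd1 : (l+1)*(l-1)^2*(l-q)*(l-q^2) ≠ 0 :=
      mul_ne_zero (mul_ne_zero (mul_ne_zero hm1 (pow_ne_zero 2 h1)) hlq) hlq2
    have hd3 : 3*(l-1)^2 ≠ 0 := mul_ne_zero three_ne_zero (pow_ne_zero 2 h1)
    exact ⟨fun h => (W.smul_mem_iff (div_ne_zero h hd0)).mp k0,
      fun h => (W.smul_mem_iff (div_ne_zero h hd1)).mp k1,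
      fun h => (W.smul_mem_iff (div_ne_zero h hd1)).mp k2,
      fun h => (W.smul_mem_iff (div_ne_zero h hd3)).mp k3, k4⟩
  -- from each eigenvector we reach `v0`
  have t1 : v1 q l ∈ W → v0 ∈ W := fun h => (comp _ (hW2 _ h)).1 (by
    rw [n01 q l hq hl]; exact mul_ne_zero h12q hA)
  have t2 : v2 q l ∈ W → v0 ∈ W := fun h => (comp _ (hW2 _ h)).1 (by
    rw [n02 q l hq hl]; exact mul_ne_zero (mul_ne_zero (mul_ne_zero h12q hl) hB) hC)
  have t3 : v3 q l ∈ W → v0 ∈ W := fun h => (comp _ (hW2 _ h)).1 (by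
    rw [n03 q l hq hl]; exact mul_ne_zero (mul_ne_zero three_ne_zero hA) hB)
  have t4 : ∀ a b : ℂ, a • v4 q l + b • v5 q ∈ W → v0 ∈ W ∨ (a = 0 ∧ b = 0) := by
    intro a b h
    obtain ⟨-, -, c2, c3, -⟩ := comp _ (hW2 _ h)
    rw [n2 q l hq hl] at c2
    rw [n3 q l hq hl] at c3
    by_cases z2 : a*(l+q^2) - q*b = 0
    · by_cases z3 : a*(1+q)*(l+q) + q*b = 0
      · right
        have ha : a * ((q-1)*(l-1)) = 0 := by grind
        have ha : a = 0 := by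
          rcases mul_eq_zero.mp ha with h | h
          · exact h
          · exact absurd h (mul_ne_zero hq1 h1)
        subst ha
        refine ⟨rfl, ?_⟩
        simpa [hq0] using z3
      · exact Or.inl (t3 (c3 z3))
    · exact Or.inl (t2 (c2 (mul_ne_zero (pow_ne_zero 2 hl) z2)))
  by_cases hv0 : v0 ∈ W
  · right
    obtain ⟨-, c1, c2, c3, c4⟩ := comp _ (hW2 _ hv0)
    have m1 : v1 q l ∈ W := c1 (by
      intro h
      have := n10 q l hq hl
      rw [h] at this
      apply hD; linear_combination this)
    have m2 : v2 q l ∈ W := c2 (by rw [n20 q l hq hl]; positivity)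
    have m3 : v3 q l ∈ W := c3 (by rw [n30 q l hq hl]; norm_num)
    obtain ⟨-, -, -, -, c5⟩ := comp _ (hW2 _ m1)
    rw [n40 q l hq hl, n50 q l hq hl] at c4
    rw [n41 q l hq hl, n51 q l hq hl] at c5
    have m5 : v5 q ∈ W := by
      have h := W.add_mem c4 c5
      have e : (1 / (3*(l-q^2))) • v4 q l + ((l+q^2) / (3*(l-q))) • v5 q +
          ((-1 / (3*(l-q^2))) • v4 q l + (-q*(l+1) / (3*(l-q))) • v5 q)
          = (-(q-1)/3) • v5 q := by
        have : ((l+q^2) / (3*(l-q))) + (-q*(l+1) / (3*(l-q))) = -(q-1)/3 := by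
          field_simp; grind
        rw [← this]; module
      rw [e] at h
      exact (W.smul_mem_iff (div_ne_zero (neg_ne_zero.mpr hq1) (by norm_num))).mp h
    have m4 : v4 q l ∈ W := by
      have h := (W.add_mem_iff_left (W.smul_mem _ m5)).mp c4
      exact (W.smul_mem_iff (one_div_ne_zero (mul_ne_zero three_ne_zero hlq2))).mp h
    rw [eq_top_iff]
    intro x _
    rw [decomp q l hq hl hm1 h1 hlq hlq2 x]
    exact W.add_mem (W.add_mem (W.add_mem (W.add_mem (W.smul_mem _ hv0) (W.smul_mem _ m1))
      (W.smul_mem _ m2)) (W.smul_mem _ m3)) (W.add_mem (W.smul_mem _ m4) (W.smul_mem _ m5))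
  · left
    rw [eq_bot_iff]
    intro x hx
    obtain ⟨c0, c1, c2, c3, c4⟩ := comp x hx
    have z0 : U0 q l x = 0 := by by_contra h; exact hv0 (c0 h)
    have z1 : U1 q l x = 0 := by by_contra h; exact hv0 (t1 (c1 h))
    have z2 : U2 l x = 0 := by by_contra h; exact hv0 (t2 (c2 h))
    have z3 : U3 x = 0 := by by_contra h; exact hv0 (t3 (c3 h))
    obtain ⟨z4, z5⟩ := (t4 _ _ c4).resolve_left hv0
    rw [Submodule.mem_bot, decomp q l hq hl hm1 h1 hlq hlq2 x, z0, z1, z2, z3, z4, z5]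
    simp

/-- A reducibility criterion: the kernel of an intertwined matrix. -/
lemma reducible {q l : ℂ} {k : ℕ} (L : Matrix (Fin k) (Fin 6) ℂ)
    (h1 : ∀ x, L.mulVec x = 0 → L.mulVec ((M1 q l).mulVec x) = 0)
    (h2 : ∀ x, L.mulVec x = 0 → L.mulVec ((M2 q l).mulVec x) = 0)
    (x y : Fin 6 → ℂ) (hx : L.mulVec x = 0) (hx0 : x ≠ 0) (hy : L.mulVec y ≠ 0) :
    ¬ ∀ W : Submodule ℂ (Fin 6 → ℂ), RhoInvariant q l W → W = ⊥ ∨ W = ⊤ := by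
  intro h
  rcases h (LinearMap.ker L.mulVecLin) ⟨by simpa using h1, by simpa using h2⟩ with h | h
  · exact hx0 (by
      have : x ∈ LinearMap.ker L.mulVecLin := by simpa using hx
      rw [h] at this; simpa using this)
  · exact hy (by
      have : y ∈ LinearMap.ker L.mulVecLin := by rw [h]; trivial
      simpa using this)

lemma redA (q l : ℂ) (hq : q^2 + q + 1 = 0) (hl : l ≠ 0) (h : l^2 = -q) :
    ¬ ∀ W : Submodule ℂ (Fin 6 → ℂ), RhoInvariant q l W → W = ⊥ ∨ W = ⊤ := by
  obtain rfl : q = -l^2 := by linear_combination h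
  have hi : l⁻¹ = l - l^3 := by
    apply inv_eq_of_mul_eq_one_right; linear_combination -hq
  refine reducible
    !![0, 0, 0, 0, -1+l-l^3, 1; 0, 0, l, 1, 0, 0; -l^2-l^3, 1, 0, 0, 0, 0]
    ?_ ?_ ![1, l^2+l^3, 0, 0, 0, 0] ![0, 0, 0, 0, 0, 1] ?_ ?_ ?_
  · intro x hx
    have r0 := congrFun hx 0
    have r1 := congrFun hx 1
    have r2 := congrFun hx 2
    simp [mulVec, dotProduct, Fin.sum_univ_succ] at r0 r1 r2
    have s0 : x 5 = -((-1+l-l^3)*x 4) := by linear_combination r0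
    have s1 : x 3 = -(l*x 2) := by linear_combination r1
    have s2 : x 1 = -((-l^2-l^3)*x 0) := by linear_combination r2
    ext i
    fin_cases i <;> simp [M1, mulVec, dotProduct, Fin.sum_univ_succ, div_eq_mul_inv, hi,
      s0, s1, s2] <;> clear s0 r0 s1 r1 s2 r2 hx hi hl <;> grind
  · intro x hx
    have r0 := congrFun hx 0
    have r1 := congrFun hx 1
    have r2 := congrFun hx 2
    simp [mulVec, dotProduct, Fin.sum_univ_succ] at r0 r1 r2
    have s0 : x 5 = -((-1+l-l^3)*x 4) := by linear_combination r0
    have s1 : x 3 = -(l*x 2) := by linear_combination r1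
    have s2 : x 1 = -((-l^2-l^3)*x 0) := by linear_combination r2
    ext i
    fin_cases i <;> simp [M2, mulVec, dotProduct, Fin.sum_univ_succ, div_eq_mul_inv, hi,
      s0, s1, s2] <;> clear s0 r0 s1 r1 s2 r2 hx hi hl <;> grind
  · ext i
    fin_cases i <;> simp [mulVec, dotProduct, Fin.sum_univ_succ]
  · intro h; simpa using congrFun h 0
  · intro h; simpa [mulVec, dotProduct, Fin.sum_univ_succ] using congrFun h 0

lemma redB (q l : ℂ) (hq : q^2 + q + 1 = 0) (hl : l ≠ 0) (h : l^2 = -q^2) :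
    ¬ ∀ W : Submodule ℂ (Fin 6 → ℂ), RhoInvariant q l W → W = ⊥ ∨ W = ⊤ := by
  obtain rfl : q = l^2 - 1 := by grind
  have hp : l^4 - l^2 + 1 = 0 := by linear_combination hq
  have hi : l⁻¹ = l - l^3 := by
    apply inv_eq_of_mul_eq_one_right; linear_combination -hq
  refine reducible
    !![-2+4*l^2+10*l^3, -6+4*l+10*l^2-10*l^3, -5+8*l-5*l^2, 0, 0, 11;
       -12-14*l-2*l^2+2*l^3, -9-4*l+9*l^2+8*l^3, 2+8*l-8*l^2-2*l^3, 0, 11, 0;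
       -3-4*l-3*l^2, -6-2*l+2*l^2+6*l^3, 4+10*l-2*l^2-10*l^3, 11, 0, 0]
    ?_ ?_ ![11, 0, 0, 3+4*l+3*l^2, 12+14*l+2*l^2-2*l^3, 2-4*l^2-10*l^3]
      ![0, 0, 0, 0, 0, 1] ?_ ?_ ?_
  · intro x hx
    have r0 := congrFun hx 0
    have r1 := congrFun hx 1
    have r2 := congrFun hx 2
    simp [mulVec, dotProduct, Fin.sum_univ_succ] at r0 r1 r2
    have s0 : x 5 = -((-2+4*l^2+10*l^3)*x 0 + (-6+4*l+10*l^2-10*l^3)*x 1 + (-5+8*l-5*l^2)*x 2)/11 := by linear_combination 1/11*r0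
    have s1 : x 4 = -((-12-14*l-2*l^2+2*l^3)*x 0 + (-9-4*l+9*l^2+8*l^3)*x 1 + (2+8*l-8*l^2-2*l^3)*x 2)/11 := by linear_combination 1/11*r1
    have s2 : x 3 = -((-3-4*l-3*l^2)*x 0 + (-6-2*l+2*l^2+6*l^3)*x 1 + (4+10*l-2*l^2-10*l^3)*x 2)/11 := by linear_combination 1/11*r2
    ext i
    fin_cases i <;> simp [M1, mulVec, dotProduct, Fin.sum_univ_succ, div_eq_mul_inv, hi,
      s0, s1, s2] <;> clear s0 r0 s1 r1 s2 r2 hx hi hl <;> grind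
  · intro x hx
    have r0 := congrFun hx 0
    have r1 := congrFun hx 1
    have r2 := congrFun hx 2
    simp [mulVec, dotProduct, Fin.sum_univ_succ] at r0 r1 r2
    have s0 : x 5 = -((-2+4*l^2+10*l^3)*x 0 + (-6+4*l+10*l^2-10*l^3)*x 1 + (-5+8*l-5*l^2)*x 2)/11 := by linear_combination 1/11*r0
    have s1 : x 4 = -((-12-14*l-2*l^2+2*l^3)*x 0 + (-9-4*l+9*l^2+8*l^3)*x 1 + (2+8*l-8*l^2-2*l^3)*x 2)/11 := by linear_combination 1/11*r1
    have s2 : x 3 = -((-3-4*l-3*l^2)*x 0 + (-6-2*l+2*l^2+6*l^3)*x 1 + (4+10*l-2*l^2-10*l^3)*x 2)/11 := by linear_combination 1/11*r2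
    ext i
    fin_cases i <;> simp [M2, mulVec, dotProduct, Fin.sum_univ_succ, div_eq_mul_inv, hi,
      s0, s1, s2] <;> clear s0 r0 s1 r1 s2 r2 hx hi hl <;> grind
  · ext i
    fin_cases i <;> simp [mulVec, dotProduct, Fin.sum_univ_succ] <;> ring
  · intro h; simpa using congrFun h 0
  · intro h; simpa [mulVec, dotProduct, Fin.sum_univ_succ] using congrFun h 0

lemma redC (q l : ℂ) (hq : q^2 + q + 1 = 0) (hl : l ≠ 0) (h : l^3 = q) :
    ¬ ∀ W : Submodule ℂ (Fin 6 → ℂ), RhoInvariant q l W → W = ⊥ ∨ W = ⊤ := by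
  subst h
  have hi : l⁻¹ = -l^2-l^5 := by
    apply inv_eq_of_mul_eq_one_right; linear_combination -hq
  refine reducible
    !![0, 0, 0, 0, 0, 1;
       0, -1+l^2, 1-l-l^2+l^3-l^5, 0, 1, 0;
       0, l^2+l^5, -l-l^4-l^5, 1, 0, 0;
       1, 0, 0, 0, 0, 0]
    ?_ ?_ ![0, 1, 0, -l^2-l^5, 1-l^2, 0] ![0, 0, 0, 0, 0, 1] ?_ ?_ ?_
  · intro x hx
    have r0 := congrFun hx 0
    have r1 := congrFun hx 1
    have r2 := congrFun hx 2
    have r3 := congrFun hx 3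
    simp [mulVec, dotProduct, Fin.sum_univ_succ] at r0 r1 r2 r3
    have s0 : x 5 = 0 := by linear_combination r0
    have s1 : x 4 = -((-1+l^2)*x 1 + (1-l-l^2+l^3-l^5)*x 2) := by linear_combination r1
    have s2 : x 3 = -((l^2+l^5)*x 1 + (-l-l^4-l^5)*x 2) := by linear_combination r2
    have s3 : x 0 = 0 := by linear_combination r3
    ext i
    fin_cases i <;> simp [M1, mulVec, dotProduct, Fin.sum_univ_succ, div_eq_mul_inv, hi,
      s0, s1, s2, s3] <;> clear s0 r0 s1 r1 s2 r2 s3 r3 hx hi hl <;> grind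
  · intro x hx
    have r0 := congrFun hx 0
    have r1 := congrFun hx 1
    have r2 := congrFun hx 2
    have r3 := congrFun hx 3
    simp [mulVec, dotProduct, Fin.sum_univ_succ] at r0 r1 r2 r3
    have s0 : x 5 = 0 := by linear_combination r0
    have s1 : x 4 = -((-1+l^2)*x 1 + (1-l-l^2+l^3-l^5)*x 2) := by linear_combination r1
    have s2 : x 3 = -((l^2+l^5)*x 1 + (-l-l^4-l^5)*x 2) := by linear_combination r2
    have s3 : x 0 = 0 := by linear_combination r3
    ext i
    fin_cases i <;> simp [M2, mulVec, dotProduct, Fin.sum_univ_succ, div_eq_mul_inv, hi,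
      s0, s1, s2, s3] <;> clear s0 r0 s1 r1 s2 r2 s3 r3 hx hi hl <;> grind
  · ext i
    fin_cases i <;> simp [mulVec, dotProduct, Fin.sum_univ_succ] <;> ring
  · intro h; simpa using congrFun h 1
  · intro h; simpa [mulVec, dotProduct, Fin.sum_univ_succ] using congrFun h 0

lemma redD (q l : ℂ) (hq : q^2 + q + 1 = 0) (hl : l ≠ 0) (h : l^3 = q^2) :
    ¬ ∀ W : Submodule ℂ (Fin 6 → ℂ), RhoInvariant q l W → W = ⊥ ∨ W = ⊤ := by
  obtain rfl : q = -1 - l^3 := by linear_combination hq + h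
  have hp : l^6 + l^3 + 1 = 0 := by linear_combination hq
  have hi : l⁻¹ = -l^2-l^5 := by
    apply inv_eq_of_mul_eq_one_right; linear_combination -hq
  refine reducible
    !![0, -1+l^2, -l^2, 0, 1, 0;
       0, -1+l^2-l^4, -l^2+l^4, 1, 0, 0]
    ?_ ?_ ![1, 0, 0, 0, 0, 0] ![0, 0, 0, 0, 1, 0] ?_ ?_ ?_
  · intro x hx
    have r0 := congrFun hx 0
    have r1 := congrFun hx 1
    simp [mulVec, dotProduct, Fin.sum_univ_succ] at r0 r1
    have s0 : x 4 = -((-1+l^2)*x 1 - l^2*x 2) := by linear_combination r0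
    have s1 : x 3 = -((-1+l^2-l^4)*x 1 + (-l^2+l^4)*x 2) := by linear_combination r1
    ext i
    fin_cases i <;> simp [M1, mulVec, dotProduct, Fin.sum_univ_succ, div_eq_mul_inv, hi,
      s0, s1] <;> clear s0 r0 s1 r1 hx hi hl <;> grind
  · intro x hx
    have r0 := congrFun hx 0
    have r1 := congrFun hx 1
    simp [mulVec, dotProduct, Fin.sum_univ_succ] at r0 r1
    have s0 : x 4 = -((-1+l^2)*x 1 - l^2*x 2) := by linear_combination r0
    have s1 : x 3 = -((-1+l^2-l^4)*x 1 + (-l^2+l^4)*x 2) := by linear_combination r1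
    ext i
    fin_cases i <;> simp [M2, mulVec, dotProduct, Fin.sum_univ_succ, div_eq_mul_inv, hi,
      s0, s1] <;> clear s0 r0 s1 r1 hx hi hl <;> grind
  · ext i
    fin_cases i <;> simp [mulVec, dotProduct, Fin.sum_univ_succ]
  · intro h; simpa using congrFun h 0
  · intro h; simpa [mulVec, dotProduct, Fin.sum_univ_succ] using congrFun h 0

end Stmt13Aux

theorem stmt13 (q l : ℂ) (hq3 : q^3 = 1) (hq1 : q ≠ 1) (hl0 : l ≠ 0)
    (hm1 : l ≠ -1) (h1 : l ≠ 1) (hq : l ≠ q) (hq2 : l ≠ q^2) :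
    (∀ W : Submodule ℂ (Fin 6 → ℂ), RhoInvariant q l W → W = ⊥ ∨ W = ⊤) ↔
      (l^2 ≠ -q ∧ l^2 ≠ -q^2 ∧ l^3 ≠ q ∧ l^3 ≠ q^2) := by
  have hqq : q^2 + q + 1 = 0 := by
    have : (q - 1) * (q^2 + q + 1) = 0 := by linear_combination hq3
    exact (mul_eq_zero.mp this).resolve_left (sub_ne_zero.mpr hq1)
  constructor
  · intro h
    exact ⟨fun e => Stmt13Aux.redA q l hqq hl0 e h, fun e => Stmt13Aux.redB q l hqq hl0 e h,
      fun e => Stmt13Aux.redC q l hqq hl0 e h, fun e => Stmt13Aux.redD q l hqq hl0 e h⟩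
  · rintro ⟨hA, hB, hC, hD⟩ W hW
    exact Stmt13Aux.irreducible q l hqq hl0 (fun e => hm1 (eq_neg_of_add_eq_zero_left e))
      (sub_ne_zero.mpr h1) (sub_ne_zero.mpr hq) (sub_ne_zero.mpr hq2)
      (fun e => hA (eq_neg_of_add_eq_zero_left e)) (fun e => hB (eq_neg_of_add_eq_zero_left e))
      (sub_ne_zero.mpr hC) (sub_ne_zero.mpr hD) W hW
end

section
/- There is no complex number λ satisfying simultaneously 1 + q + (2+q)λ − (1+2q)λ² + q²λ³ = 0 and 1 + q² − λ − (2+q)λ² + q²λ³ + qλ⁴ = 0. -/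
theorem stmt15 (q : ℂ) (hq3 : q^3 = 1) (hq1 : q ≠ 1) :
    ¬ ∃ l : ℂ,
      1 + q + (2+q)*l - (1+2*q)*l^2 + q^2*l^3 = 0 ∧
      1 + q^2 - l - (2+q)*l^2 + q^2*l^3 + q*l^4 = 0 := by
  rintro ⟨l, h1, h2⟩
  have h : q^2 + q + 1 = 0 := by
    apply mul_left_cancel₀ (sub_ne_zero.mpr hq1)
    linear_combination hq3
  clear hq3 hq1
  grind
end
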